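/- arXiv:2411.13575 — 3 statements merged into one kernel-verified Lean document; each statement's English description precedes it below -/
import Mathlib

section
/- Let κ > 0 and let U ⊆ ℝ² be an open connected set whose complement K = ℝ² \ U is compact and connected. Let L = {x₀ + sθ : s ∈ ℝ} be a straight line (x₀ ∈ ℝ², θ a unit vector) with L ⊆ U. If ψ₁ and ψ₂ are radiation solutions on U such that Im ψ₁(x) = Im ψ₂(x) for all x ∈ L, then ψ₁(x) = ψ₂(x) for all x ∈ U. -/
noncomputable section

open Real MeasureTheory Set

/-- The plane `ℝ²`. -/
abbrev R2 : Type := EuclideanSpace ℝ (Fin 2)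

/-- The Laplacian of a complex-valued function on `ℝ²`, as the sum of the second
derivatives along the standard coordinate directions. -/
def laplacian2 (f : R2 → ℂ) (x : R2) : ℂ :=
  ∑ i : Fin 2,
    fderiv ℝ (fun y => fderiv ℝ f y (EuclideanSpace.single i 1)) x (EuclideanSpace.single i 1)

/-- `ψ` is a radiation solution of the Helmholtz equation `Δψ + κ²ψ = 0` on `U`:
it is `C²` on `U`, satisfies the Helmholtz equation on `U`, and satisfies the
Sommerfeld radiation condition
`√|x| (∂ψ/∂|x| − iκψ)(x) → 0` as `|x| → ∞`, uniformly in `x/|x|`. -/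
def IsRadiationSolution (κ : ℝ) (U : Set R2) (ψ : R2 → ℂ) : Prop :=
  ContDiffOn ℝ 2 ψ U ∧
  (∀ x ∈ U, laplacian2 ψ x + (κ : ℂ) ^ 2 * ψ x = 0) ∧
  ∀ ε > 0, ∃ R > 0, ∀ x ∈ U, R ≤ ‖x‖ →
    ‖(Real.sqrt ‖x‖ : ℂ) *
      (fderiv ℝ ψ x (‖x‖⁻¹ • x) - Complex.I * (κ : ℂ) * ψ x)‖ < ε

open Filter Topology

/-- Classical solutions of the Helmholtz equation on `U`. -/
structure IsHelmholtzOn (κ : ℝ) (U : Set R2) (f : R2 → ℂ) : Prop where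
  contDiffOn : ContDiffOn ℝ 2 f U
  eqn : ∀ x ∈ U, laplacian2 f x + (κ : ℂ) ^ 2 * f x = 0

/-- Counterclockwise rotation by a right angle. -/
def perp (u : R2) : R2 := !₂[-u 1, u 0]

/-- The unit vector with polar angle `t`. -/
def dir (t : ℝ) : R2 := !₂[cos t, sin t]

@[simp] lemma perp_zero_apply (u : R2) : perp u 0 = -u 1 := rfl
@[simp] lemma perp_one_apply (u : R2) : perp u 1 = u 0 := rfl
@[simp] lemma dir_zero_apply (t : ℝ) : dir t 0 = cos t := rfl
@[simp] lemma dir_one_apply (t : ℝ) : dir t 1 = sin t := rfl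

lemma R2_norm_sq (u : R2) : ‖u‖ ^ 2 = u 0 ^ 2 + u 1 ^ 2 := by
  rw [EuclideanSpace.norm_sq_eq]; simp

lemma R2_ext {u v : R2} (h0 : u 0 = v 0) (h1 : u 1 = v 1) : u = v := by
  ext i; fin_cases i <;> assumption

lemma R2_inner (u v : R2) : inner ℝ u v = u 0 * v 0 + u 1 * v 1 := by
  simp [PiLp.inner_apply, Fin.sum_univ_two]; ring

lemma R2_eq_single (u : R2) :
    u = u 0 • EuclideanSpace.single 0 (1 : ℝ) + u 1 • EuclideanSpace.single 1 (1 : ℝ) := by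
  apply R2_ext <;> simp

@[simp] lemma norm_dir (t : ℝ) : ‖dir t‖ = 1 := by
  have h := R2_norm_sq (dir t)
  simp only [dir_zero_apply, dir_one_apply, cos_sq_add_sin_sq] at h
  nlinarith [norm_nonneg (dir t)]

@[simp] lemma norm_perp (u : R2) : ‖perp u‖ = ‖u‖ := by
  have h := R2_norm_sq (perp u)
  have h' := R2_norm_sq u
  simp only [perp_zero_apply, perp_one_apply] at h
  rw [← sq_eq_sq₀ (norm_nonneg _) (norm_nonneg _)]
  linarith

lemma hasDerivAt_dir (t : ℝ) : HasDerivAt dir (perp (dir t)) t := by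
  have h : HasDerivAt (fun s : ℝ => cos s • EuclideanSpace.single (0 : Fin 2) (1 : ℝ)
      + sin s • EuclideanSpace.single (1 : Fin 2) (1 : ℝ))
      ((-sin t) • EuclideanSpace.single (0 : Fin 2) (1 : ℝ)
      + cos t • EuclideanSpace.single (1 : Fin 2) (1 : ℝ)) t :=
    ((hasDerivAt_cos t).smul_const _).add ((hasDerivAt_sin t).smul_const _)
  convert! h using 1
  · funext s; exact R2_eq_single (dir s)
  · exact R2_eq_single (perp (dir t))

lemma perp_dir (t : ℝ) : perp (dir t) = dir (t + π / 2) := by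
  apply R2_ext <;> simp [cos_add_pi_div_two, sin_add_pi_div_two]

lemma hasDerivAt_perp_dir (t : ℝ) : HasDerivAt (fun s => perp (dir s)) (-dir t) t := by
  have h := (hasDerivAt_dir (t + π / 2)).comp_add_const t (π / 2)
  have : perp (dir (t + π / 2)) = -dir t := by
    apply R2_ext <;> simp [cos_add_pi_div_two, sin_add_pi_div_two]
  rw [this] at h
  simpa only [perp_dir] using h

lemma continuous_dir : Continuous dir :=
  continuous_iff_continuousAt.2 fun t => (hasDerivAt_dir t).continuousAt

lemma continuous_perp_dir : Continuous fun t => perp (dir t) :=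
  continuous_iff_continuousAt.2 fun t => (hasDerivAt_perp_dir t).continuousAt

lemma dir_add_two_pi (t : ℝ) : dir (t + 2 * π) = dir t := by
  apply R2_ext <;> simp

lemma exists_dir (u : R2) (hu : ‖u‖ = 1) : ∃ t, u = dir t := by
  have h := R2_norm_sq u
  rw [hu] at h
  have hz : ‖(⟨u 0, u 1⟩ : ℂ)‖ = 1 := by
    rw [Complex.norm_def, Complex.normSq_apply]
    simp only []
    rw [show u 0 * u 0 + u 1 * u 1 = 1 by linarith, Real.sqrt_one]
  refine ⟨Complex.arg ⟨u 0, u 1⟩, ?_⟩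
  apply R2_ext
  · have := Complex.norm_mul_cos_arg ⟨u 0, u 1⟩
    rw [hz, one_mul] at this; simp [this]
  · have := Complex.norm_mul_sin_arg ⟨u 0, u 1⟩
    rw [hz, one_mul] at this; simp [this]

lemma exists_polar (c x : R2) : ∃ t, x = c + ‖x - c‖ • dir t := by
  by_cases h : x - c = 0
  · exact ⟨0, by rw [h]; simp [sub_eq_zero.1 h]⟩
  · obtain ⟨t, ht⟩ := exists_dir (‖x - c‖⁻¹ • (x - c)) (by
      rw [norm_smul, norm_inv, norm_norm, inv_mul_cancel₀ (norm_ne_zero_iff.2 h)])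
    refine ⟨t, ?_⟩
    rw [← ht, smul_smul, mul_inv_cancel₀ (norm_ne_zero_iff.2 h), one_smul]; abel

/-- The trace of a bilinear form may be computed in any positively oriented orthonormal frame. -/
lemma bilin_trace_eq (B : R2 →L[ℝ] R2 →L[ℝ] ℂ) (u : R2) (hu : ‖u‖ = 1) :
    B u u + B (perp u) (perp u) = ∑ i : Fin 2, B (EuclideanSpace.single i 1)
      (EuclideanSpace.single i 1) := by
  have h := R2_norm_sq u
  rw [hu] at h
  have hc : (u 0 : ℂ) ^ 2 + (u 1 : ℂ) ^ 2 = 1 := by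
    have h' : u 0 ^ 2 + u 1 ^ 2 = 1 := by linarith
    have h2 := congrArg Complex.ofReal h'
    push_cast at h2
    exact h2
  have hB : ∀ v w : R2, B v w = v 0 * (w 0 * B (EuclideanSpace.single 0 1)
      (EuclideanSpace.single 0 1) + w 1 * B (EuclideanSpace.single 0 1)
      (EuclideanSpace.single 1 1)) + v 1 * (w 0 * B (EuclideanSpace.single 1 1)
      (EuclideanSpace.single 0 1) + w 1 * B (EuclideanSpace.single 1 1)
      (EuclideanSpace.single 1 1)) := by
    intro v w
    conv_lhs => rw [R2_eq_single v, R2_eq_single w]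
    simp only [map_add, map_smul, add_apply, smul_apply, Complex.real_smul]
    ring
  rw [Fin.sum_univ_two, hB u u, hB (perp u) (perp u)]
  simp only [perp_zero_apply, perp_one_apply]
  push_cast
  linear_combination (B (EuclideanSpace.single 0 1) (EuclideanSpace.single 0 1)
    + B (EuclideanSpace.single 1 1) (EuclideanSpace.single 1 1)) * hc

lemma hasFDerivAt_of_contDiffOn {U : Set R2} (hU : IsOpen U) {f : R2 → ℂ}
    (hf : ContDiffOn ℝ 2 f U) {x : R2} (hx : x ∈ U) : HasFDerivAt f (fderiv ℝ f x) x :=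
  ((hf.contDiffAt (hU.mem_nhds hx)).differentiableAt (by norm_num)).hasFDerivAt

lemma contDiffOn_fderiv {U : Set R2} (hU : IsOpen U) {f : R2 → ℂ}
    (hf : ContDiffOn ℝ 2 f U) : ContDiffOn ℝ 1 (fderiv ℝ f) U :=
  hf.fderiv_of_isOpen hU (by norm_num)

lemma hasFDerivAt_fderiv_of_contDiffOn {U : Set R2} (hU : IsOpen U) {f : R2 → ℂ}
    (hf : ContDiffOn ℝ 2 f U) {x : R2} (hx : x ∈ U) :
    HasFDerivAt (fderiv ℝ f) (fderiv ℝ (fderiv ℝ f) x) x :=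
  (((contDiffOn_fderiv hU hf).contDiffAt (hU.mem_nhds hx)).differentiableAt
    (by norm_num)).hasFDerivAt

lemma continuousOn_fderiv_fderiv {U : Set R2} (hU : IsOpen U) {f : R2 → ℂ}
    (hf : ContDiffOn ℝ 2 f U) : ContinuousOn (fderiv ℝ (fderiv ℝ f)) U :=
  (contDiffOn_fderiv hU hf).continuousOn_fderiv_of_isOpen hU (by norm_num)

lemma laplacian2_eq {U : Set R2} (hU : IsOpen U) {f : R2 → ℂ}
    (hf : ContDiffOn ℝ 2 f U) {x : R2} (hx : x ∈ U) :
    laplacian2 f x = ∑ i : Fin 2, fderiv ℝ (fderiv ℝ f) x (EuclideanSpace.single i 1)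
      (EuclideanSpace.single i 1) := by
  unfold laplacian2
  refine Finset.sum_congr rfl fun i _ => ?_
  have h := (hasFDerivAt_fderiv_of_contDiffOn hU hf hx).clm_apply
    (hasFDerivAt_const (EuclideanSpace.single i (1 : ℝ)) x)
  rw [h.fderiv]
  simp

/-- The Helmholtz equation in terms of an orthonormal frame. -/
lemma IsHelmholtzOn.frame {κ : ℝ} {U : Set R2} (hU : IsOpen U) {f : R2 → ℂ}
    (hf : IsHelmholtzOn κ U f) {x : R2} (hx : x ∈ U) {u : R2} (hu : ‖u‖ = 1) :
    fderiv ℝ (fderiv ℝ f) x u u + fderiv ℝ (fderiv ℝ f) x (perp u) (perp u)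
      = -((κ : ℂ) ^ 2 * f x) := by
  rw [bilin_trace_eq _ u hu, ← laplacian2_eq hU hf.contDiffOn hx]
  linear_combination hf.eqn x hx

/-- A criterion for being a Helmholtz solution through first and second derivatives. -/
lemma IsHelmholtzOn.of_hasFDerivAt {κ : ℝ} {U : Set R2} (hU : IsOpen U) {f : R2 → ℂ}
    {D : R2 → R2 →L[ℝ] ℂ} {D2 : R2 → R2 →L[ℝ] R2 →L[ℝ] ℂ}
    (h1 : ∀ x ∈ U, HasFDerivAt f (D x) x) (h2 : ∀ x ∈ U, HasFDerivAt D (D2 x) x)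
    (h3 : ContinuousOn D2 U)
    (h4 : ∀ x ∈ U, ∑ i : Fin 2, D2 x (EuclideanSpace.single i 1) (EuclideanSpace.single i 1)
      = -((κ : ℂ) ^ 2 * f x)) : IsHelmholtzOn κ U f := by
  have c1 : ContDiffOn ℝ 1 D U := by
    refine (contDiffOn_succ_iff_fderiv_of_isOpen (n := 0) hU).2
      ⟨fun x hx => (h2 x hx).differentiableAt.differentiableWithinAt, by simp, ?_⟩
    rw [contDiffOn_zero]
    exact h3.congr fun x hx => (h2 x hx).fderiv
  have c2 : ContDiffOn ℝ 2 f U := by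
    refine (contDiffOn_succ_iff_fderiv_of_isOpen (n := 1) hU).2
      ⟨fun x hx => (h1 x hx).differentiableAt.differentiableWithinAt, by simp, ?_⟩
    exact c1.congr fun x hx => (h1 x hx).fderiv
  refine ⟨c2, fun x hx => ?_⟩
  have e : fderiv ℝ f =ᶠ[𝓝 x] D :=
    Filter.eventually_of_mem (hU.mem_nhds hx) fun y hy => (h1 y hy).fderiv
  rw [laplacian2_eq hU c2 hx, e.fderiv_eq, (h2 x hx).fderiv, h4 x hx]
  ring

lemma IsHelmholtzOn.sum_eq {κ : ℝ} {U : Set R2} (hU : IsOpen U) {f : R2 → ℂ}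
    (hf : IsHelmholtzOn κ U f) {x : R2} (hx : x ∈ U) :
    ∑ i : Fin 2, fderiv ℝ (fderiv ℝ f) x (EuclideanSpace.single i 1) (EuclideanSpace.single i 1)
      = -((κ : ℂ) ^ 2 * f x) := by
  rw [← laplacian2_eq hU hf.contDiffOn hx]
  linear_combination hf.eqn x hx

lemma IsHelmholtzOn.mono {κ : ℝ} {U V : Set R2} {f : R2 → ℂ}
    (hf : IsHelmholtzOn κ U f) (h : V ⊆ U) : IsHelmholtzOn κ V f :=
  ⟨hf.contDiffOn.mono h, fun x hx => hf.eqn x (h hx)⟩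

lemma IsHelmholtzOn.congr {κ : ℝ} {U : Set R2} (hU : IsOpen U) {f g : R2 → ℂ}
    (hf : IsHelmholtzOn κ U f) (h : ∀ x ∈ U, g x = f x) : IsHelmholtzOn κ U g := by
  have hgf : ∀ x ∈ U, g =ᶠ[𝓝 x] f := fun x hx => Filter.eventually_of_mem (hU.mem_nhds hx) h
  exact IsHelmholtzOn.of_hasFDerivAt hU
    (fun x hx => (hasFDerivAt_of_contDiffOn hU hf.contDiffOn hx).congr_of_eventuallyEq (hgf x hx))
    (fun x hx => hasFDerivAt_fderiv_of_contDiffOn hU hf.contDiffOn hx)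
    (continuousOn_fderiv_fderiv hU hf.contDiffOn)
    (fun x hx => by rw [hf.sum_eq hU hx, h x hx])

lemma IsHelmholtzOn.union {κ : ℝ} {U V : Set R2} {f : R2 → ℂ} (hU : IsOpen U) (hV : IsOpen V)
    (hf : IsHelmholtzOn κ U f) (hg : IsHelmholtzOn κ V f) : IsHelmholtzOn κ (U ∪ V) f :=
  ⟨hf.contDiffOn.union_of_isOpen hg.contDiffOn hU hV, fun x hx =>
    hx.elim (hf.eqn x) (hg.eqn x)⟩

lemma IsHelmholtzOn.add {κ : ℝ} {U : Set R2} (hU : IsOpen U) {f g : R2 → ℂ}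
    (hf : IsHelmholtzOn κ U f) (hg : IsHelmholtzOn κ U g) :
    IsHelmholtzOn κ U (fun x => f x + g x) :=
  have : ContinuousAdd (R2 →L[ℝ] R2 →L[ℝ] ℂ) :=
    ContinuousLinearMap.topologicalAddGroup.toContinuousAdd
  IsHelmholtzOn.of_hasFDerivAt hU
    (fun _ hx => (hasFDerivAt_of_contDiffOn hU hf.contDiffOn hx).add
      (hasFDerivAt_of_contDiffOn hU hg.contDiffOn hx))
    (fun _ hx => (hasFDerivAt_fderiv_of_contDiffOn hU hf.contDiffOn hx).add
      (hasFDerivAt_fderiv_of_contDiffOn hU hg.contDiffOn hx))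
    (ContinuousOn.fun_add (M := R2 →L[ℝ] R2 →L[ℝ] ℂ) (continuousOn_fderiv_fderiv hU hf.contDiffOn)
      (continuousOn_fderiv_fderiv hU hg.contDiffOn))
    (fun x hx => by
      have h1 := hf.sum_eq hU hx
      have h2 := hg.sum_eq hU hx
      simp only [Fin.sum_univ_two, add_apply] at h1 h2 ⊢
      linear_combination h1 + h2)

/-- Post-composition with a real-linear map of `ℂ`. -/
lemma IsHelmholtzOn.clm_comp {κ : ℝ} {U : Set R2} (hU : IsOpen U) {f : R2 → ℂ}
    (hf : IsHelmholtzOn κ U f) (l : ℂ →L[ℝ] ℂ) : IsHelmholtzOn κ U (fun x => l (f x)) := by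
  refine IsHelmholtzOn.of_hasFDerivAt hU (D := fun x => l.comp (fderiv ℝ f x))
    (D2 := fun x => (ContinuousLinearMap.compL ℝ R2 ℂ ℂ l).comp (fderiv ℝ (fderiv ℝ f) x))
    (fun x hx => l.hasFDerivAt.comp x (hasFDerivAt_of_contDiffOn hU hf.contDiffOn hx))
    (fun x hx => (ContinuousLinearMap.compL ℝ R2 ℂ ℂ l).hasFDerivAt.comp x
      (hasFDerivAt_fderiv_of_contDiffOn hU hf.contDiffOn hx))
    (continuousOn_const.clm_comp (continuousOn_fderiv_fderiv hU hf.contDiffOn))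
    (fun x hx => ?_)
  have h1 := congrArg l (hf.sum_eq hU hx)
  rw [map_sum] at h1
  have h2 : -((κ : ℂ) ^ 2 * f x) = (-κ ^ 2 : ℝ) • f x := by simp
  rw [h2, map_smul] at h1
  simpa using h1

/-- Linear reflection in the line orthogonal to the unit vector `n`. -/
def reflCLM (n : R2) : R2 →L[ℝ] R2 :=
  ContinuousLinearMap.id ℝ R2 - (2 : ℝ) • (innerSL ℝ n).smulRight n

lemma reflCLM_apply (n u : R2) : reflCLM n u = u - (2 * inner ℝ n u) • n := by
  simp [reflCLM, smul_smul]

/-- Reflection in the line through `x₀` orthogonal to the unit vector `n`. -/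
def refl2 (x₀ n x : R2) : R2 := x₀ + reflCLM n (x - x₀)

lemma norm_reflCLM {n : R2} (hn : ‖n‖ = 1) (u : R2) : ‖reflCLM n u‖ = ‖u‖ := by
  have h := R2_norm_sq n
  rw [hn] at h
  rw [← sq_eq_sq₀ (norm_nonneg _) (norm_nonneg _), R2_norm_sq, R2_norm_sq, reflCLM_apply, R2_inner]
  simp only [PiLp.sub_apply, PiLp.smul_apply, smul_eq_mul]
  linear_combination (-4 * (n 0 * u 0 + n 1 * u 1) ^ 2) * h

lemma reflCLM_reflCLM {n : R2} (hn : ‖n‖ = 1) (u : R2) : reflCLM n (reflCLM n u) = u := by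
  have h : inner ℝ n n = (1 : ℝ) := by rw [real_inner_self_eq_norm_sq, hn]; norm_num
  rw [reflCLM_apply, reflCLM_apply, inner_sub_right, inner_smul_right, h]
  rw [sub_sub, ← add_smul]
  ring_nf
  simp

lemma refl2_refl2 {n : R2} (hn : ‖n‖ = 1) (x₀ x : R2) : refl2 x₀ n (refl2 x₀ n x) = x := by
  simp [refl2, reflCLM_reflCLM hn]

lemma refl2_sub (x₀ n x y : R2) : refl2 x₀ n x - refl2 x₀ n y = reflCLM n (x - y) := by
  simp only [refl2, add_sub_add_left_eq_sub, ← map_sub]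
  congr 1; abel

lemma hasFDerivAt_refl2 (x₀ n x : R2) : HasFDerivAt (refl2 x₀ n) (reflCLM n) x := by
  unfold refl2
  have := ((reflCLM n).hasFDerivAt.comp x ((hasFDerivAt_id x).sub_const x₀)).const_add x₀
  simpa using this

lemma continuous_refl2 (x₀ n : R2) : Continuous (refl2 x₀ n) :=
  continuous_iff_continuousAt.2 fun x => (hasFDerivAt_refl2 x₀ n x).continuousAt

lemma inner_refl2 {n : R2} (hn : ‖n‖ = 1) (x₀ x : R2) :
    inner ℝ n (refl2 x₀ n x - x₀) = -inner ℝ n (x - x₀) := by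
  have h : inner ℝ n n = (1 : ℝ) := by rw [real_inner_self_eq_norm_sq, hn]; norm_num
  simp only [refl2, add_sub_cancel_left, reflCLM_apply]
  rw [inner_sub_right, inner_smul_right, h]; ring

lemma reflCLM_single_one {n : R2} (hn : ‖n‖ = 1) :
    reflCLM n (EuclideanSpace.single 1 1) = -perp (reflCLM n (EuclideanSpace.single 0 1)) := by
  have h := R2_norm_sq n
  rw [hn] at h
  apply R2_ext <;> simp [reflCLM_apply, R2_inner]
  · ring
  · linarith

lemma IsHelmholtzOn.comp_refl2 {κ : ℝ} {U : Set R2} (hU : IsOpen U) {f : R2 → ℂ}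
    (hf : IsHelmholtzOn κ U f) {n : R2} (hn : ‖n‖ = 1) (x₀ : R2) :
    IsHelmholtzOn κ (refl2 x₀ n ⁻¹' U) (fun x => f (refl2 x₀ n x)) := by
  set A := reflCLM n
  set P : (R2 →L[ℝ] ℂ) →L[ℝ] (R2 →L[ℝ] ℂ) := (ContinuousLinearMap.compL ℝ R2 R2 ℂ).flip A
  refine IsHelmholtzOn.of_hasFDerivAt (hU.preimage (continuous_refl2 x₀ n))
    (D := fun x => P (fderiv ℝ f (refl2 x₀ n x)))
    (D2 := fun x => P.comp ((fderiv ℝ (fderiv ℝ f) (refl2 x₀ n x)).comp A))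
    (fun x hx => (hasFDerivAt_of_contDiffOn hU hf.contDiffOn hx).comp x (hasFDerivAt_refl2 x₀ n x))
    (fun x hx => P.hasFDerivAt.comp x
      ((hasFDerivAt_fderiv_of_contDiffOn hU hf.contDiffOn hx).comp x (hasFDerivAt_refl2 x₀ n x)))
    (continuousOn_const.clm_comp (((continuousOn_fderiv_fderiv hU hf.contDiffOn).comp
      (continuous_refl2 x₀ n).continuousOn (fun x hx => hx)).clm_comp continuousOn_const))
    (fun x hx => ?_)
  rw [Fin.sum_univ_two, ← hf.frame hU hx (u := A (EuclideanSpace.single 0 1))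
    (by rw [norm_reflCLM hn]; simp)]
  simp [P, A, reflCLM_single_one hn]

/-- The character `t ↦ exp (-i n t)`. -/
def wave (n : ℤ) (t : ℝ) : ℂ := Complex.exp (-(Complex.I * n * t))

lemma hasDerivAt_wave (n : ℤ) (t : ℝ) :
    HasDerivAt (wave n) (-(Complex.I * n) * wave n t) t := by
  have h : HasDerivAt (fun s : ℝ => -(Complex.I * n * (s : ℂ))) (-(Complex.I * n * 1)) t :=
    ((Complex.ofRealCLM.hasDerivAt (x := t)).const_mul _).neg
  convert! h.cexp using 1
  simp only [wave]; ring

lemma continuous_wave (n : ℤ) : Continuous (wave n) :=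
  continuous_iff_continuousAt.2 fun t => (hasDerivAt_wave n t).continuousAt

lemma norm_wave (n : ℤ) (t : ℝ) : ‖wave n t‖ = 1 := by
  rw [wave, Complex.norm_exp]; simp

lemma wave_add_two_pi (n : ℤ) (t : ℝ) : wave n (t + 2 * π) = wave n t := by
  simp only [wave]
  refine Complex.exp_eq_exp_iff_exists_int.2 ⟨-n, ?_⟩
  push_cast; ring

lemma conj_wave (n : ℤ) (t : ℝ) : (starRingEnd ℂ) (wave n t) = wave (-n) t := by
  simp only [wave, ← Complex.exp_conj]
  congr 1; simp

/-- The `n`-th angular mode of `f` on the circle of radius `r` about `c`. -/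
def mode (f : R2 → ℂ) (c : R2) (n : ℤ) (r : ℝ) : ℂ :=
  ∫ t in (0 : ℝ)..2 * π, f (c + r • dir t) * wave n t

/-- The `n`-th angular mode of the radial derivative of `f` on the circle of radius `r`
about `c`. -/
def dmode (f : R2 → ℂ) (c : R2) (n : ℤ) (r : ℝ) : ℂ :=
  ∫ t in (0 : ℝ)..2 * π, fderiv ℝ f (c + r • dir t) (dir t) * wave n t

/-- Differentiation under the integral sign for jointly continuous derivatives. -/
lemma hasDerivAt_intervalIntegral_of_continuousOn {F F' : ℝ → ℝ → ℂ} {S : Set ℝ}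
    {r₀ a b : ℝ} (hS : S ∈ 𝓝 r₀) (hF : ∀ r ∈ S, Continuous (F r))
    (hF' : ContinuousOn (fun p : ℝ × ℝ => F' p.1 p.2) (S ×ˢ univ))
    (hd : ∀ r ∈ S, ∀ t, HasDerivAt (fun r => F r t) (F' r t) r) :
    HasDerivAt (fun r => ∫ t in a..b, F r t) (∫ t in a..b, F' r₀ t) r₀ := by
  obtain ⟨ε, hε, hεS⟩ := Metric.nhds_basis_closedBall.mem_iff.1 hS
  have hK : IsCompact (Metric.closedBall r₀ ε ×ˢ uIcc a b) :=
    (isCompact_closedBall r₀ ε).prod isCompact_uIcc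
  obtain ⟨C, hC⟩ := hK.exists_bound_of_continuousOn
    (hF'.mono (prod_mono hεS (subset_univ _)))
  have hF'r : ∀ r ∈ S, Continuous (F' r) := fun r hr => by
    have h : ContinuousOn (fun t : ℝ => F' r t) univ :=
      hF'.comp (f := fun t : ℝ => (r, t)) (by fun_prop) fun t _ => ⟨hr, mem_univ t⟩
    exact continuousOn_univ.1 h
  have hr₀ : r₀ ∈ S := mem_of_mem_nhds hS
  refine (intervalIntegral.hasDerivAt_integral_of_dominated_loc_of_deriv_le
    (F := F) (F' := F') (bound := fun _ => C) (s := Metric.closedBall r₀ ε)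
    (Metric.closedBall_mem_nhds r₀ hε)
    (Filter.eventually_of_mem hS fun r hr => (hF r hr).aestronglyMeasurable)
    ((hF r₀ hr₀).intervalIntegrable _ _) (hF'r r₀ hr₀).aestronglyMeasurable
    (Filter.Eventually.of_forall fun t ht r hr => hC (r, t) ⟨hr, uIoc_subset_uIcc ht⟩)
    intervalIntegrable_const
    (Filter.Eventually.of_forall fun t _ r hr => hd r (hεS hr) t)).2

/-- Radii of circles about `c` contained in an open set form an open set. -/
lemma circle_subset_mem_nhds {U : Set R2} (hU : IsOpen U) {c : R2} {r : ℝ}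
    (h : ∀ t, c + r • dir t ∈ U) : {s : ℝ | ∀ t, c + s • dir t ∈ U} ∈ 𝓝 r := by
  have hc : ∀ᶠ s in 𝓝 r, ∀ u ∈ Metric.sphere (0 : R2) 1, c + s • u ∈ U := by
    refine (isCompact_sphere (0 : R2) 1).eventually_forall_of_forall_eventually fun u hu => ?_
    obtain ⟨t, rfl⟩ := exists_dir u (by simpa using hu)
    have : ContinuousAt (fun p : ℝ × R2 => c + p.1 • p.2) (r, dir t) := by fun_prop
    exact this.eventually (hU.mem_nhds (h t))
  exact hc.mono fun s hs t => hs (dir t) (by simp)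

lemma hasDerivAt_radial (c : R2) (t r : ℝ) :
    HasDerivAt (fun s : ℝ => c + s • dir t) (dir t) r := by
  simpa using ((hasDerivAt_id r).smul_const (dir t)).const_add c

lemma hasDerivAt_angular (c : R2) (r t : ℝ) :
    HasDerivAt (fun s : ℝ => c + r • dir s) (r • perp (dir t)) t :=
  ((hasDerivAt_dir t).const_smul r).const_add c

lemma hasDerivAt_mode {U : Set R2} (hU : IsOpen U) {f : R2 → ℂ} (hf : ContDiffOn ℝ 2 f U)
    {c : R2} {r : ℝ} (h : ∀ t, c + r • dir t ∈ U) (n : ℤ) :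
    HasDerivAt (mode f c n) (dmode f c n r) r := by
  refine hasDerivAt_intervalIntegral_of_continuousOn
    (F := fun r t => f (c + r • dir t) * wave n t)
    (F' := fun r t => fderiv ℝ f (c + r • dir t) (dir t) * wave n t)
    (circle_subset_mem_nhds hU h) (fun s hs => ?_) ?_ (fun s hs t => ?_)
  · refine Continuous.mul ?_ (continuous_wave n)
    exact hf.continuousOn.comp_continuous
      (continuous_const.add (continuous_dir.const_smul s)) hs
  · have hd : Continuous fun p : ℝ × ℝ => dir p.2 := continuous_dir.comp continuous_snd
    refine ContinuousOn.mul (ContinuousOn.clm_apply ?_ hd.continuousOn)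
      ((continuous_wave n).comp continuous_snd).continuousOn
    refine (contDiffOn_fderiv hU hf).continuousOn.comp ?_ fun p hp => hp.1 p.2
    exact (continuous_const.add (continuous_fst.smul hd)).continuousOn
  · exact ((hasFDerivAt_of_contDiffOn hU hf (hs t)).comp_hasDerivAt s
      (hasDerivAt_radial c t s)).mul_const _

lemma hasDerivAt_comp_angular {U : Set R2} (hU : IsOpen U) {f : R2 → ℂ}
    (hf : ContDiffOn ℝ 2 f U) {c : R2} {r t : ℝ} (h : c + r • dir t ∈ U) :
    HasDerivAt (fun s => f (c + r • dir s)) (r * fderiv ℝ f (c + r • dir t) (perp (dir t))) t := by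
  have d0 := (hasFDerivAt_of_contDiffOn hU hf h).comp_hasDerivAt t (hasDerivAt_angular c r t)
  refine d0.congr_deriv ?_
  rw [map_smul, Complex.real_smul]

lemma hasDerivAt_angular_comp_angular {U : Set R2} (hU : IsOpen U) {f : R2 → ℂ}
    (hf : ContDiffOn ℝ 2 f U) {c : R2} {r t : ℝ} (h : c + r • dir t ∈ U) :
    HasDerivAt (fun s => fderiv ℝ f (c + r • dir s) (perp (dir s)))
      (r * fderiv ℝ (fderiv ℝ f) (c + r • dir t) (perp (dir t)) (perp (dir t))
        - fderiv ℝ f (c + r • dir t) (dir t)) t := by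
  have d1 := (hasFDerivAt_fderiv_of_contDiffOn hU hf h).comp_hasDerivAt t
    (hasDerivAt_angular c r t)
  have d2 := d1.clm_apply (hasDerivAt_perp_dir t)
  refine d2.congr_deriv ?_
  rw [map_smul, map_neg, smul_apply, Complex.real_smul, sub_eq_add_neg]
  rfl

/-- The angular modes of a Helmholtz solution solve Bessel's equation. -/
lemma hasDerivAt_dmode {κ : ℝ} {U : Set R2} (hU : IsOpen U) {f : R2 → ℂ}
    (hf : IsHelmholtzOn κ U f) {c : R2} {r : ℝ} (hr : 0 < r) (h : ∀ t, c + r • dir t ∈ U) (n : ℤ) :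
    HasDerivAt (dmode f c n)
      (-(dmode f c n r) / r - ((κ : ℂ) ^ 2 - (n : ℂ) ^ 2 / (r : ℂ) ^ 2) * mode f c n r) r := by
  have hC2 := hf.contDiffOn
  have key : HasDerivAt (dmode f c n)
      (∫ t in (0 : ℝ)..2 * π, fderiv ℝ (fderiv ℝ f) (c + r • dir t) (dir t) (dir t) * wave n t)
      r := by
    refine hasDerivAt_intervalIntegral_of_continuousOn
      (F := fun r t => fderiv ℝ f (c + r • dir t) (dir t) * wave n t)
      (F' := fun r t => fderiv ℝ (fderiv ℝ f) (c + r • dir t) (dir t) (dir t) * wave n t)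
      (circle_subset_mem_nhds hU h) (fun s hs => ?_) ?_ (fun s hs t => ?_)
    · refine Continuous.mul (Continuous.clm_apply ?_ continuous_dir) (continuous_wave n)
      exact (contDiffOn_fderiv hU hC2).continuousOn.comp_continuous
        (continuous_const.add (continuous_dir.const_smul s)) hs
    · have hd : Continuous fun p : ℝ × ℝ => dir p.2 := continuous_dir.comp continuous_snd
      refine ContinuousOn.mul (ContinuousOn.clm_apply (ContinuousOn.clm_apply ?_ hd.continuousOn)
        hd.continuousOn) ((continuous_wave n).comp continuous_snd).continuousOn
      refine (continuousOn_fderiv_fderiv hU hC2).comp ?_ fun p hp => hp.1 p.2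
      exact (continuous_const.add (continuous_fst.smul hd)).continuousOn
    · have h1 := (hasFDerivAt_fderiv_of_contDiffOn hU hC2 (hs t)).comp_hasDerivAt s
        (hasDerivAt_radial c t s)
      have h2 := h1.clm_apply (hasDerivAt_const s (dir t))
      simpa using h2.mul_const (wave n t)
  convert! key using 1
  have hcont : Continuous fun t => c + r • dir t :=
    continuous_const.add (continuous_dir.const_smul r)
  have c0 : Continuous fun t => f (c + r • dir t) * wave n t :=
    (hC2.continuousOn.comp_continuous hcont h).mul (continuous_wave n)
  have c1 : Continuous fun t => fderiv ℝ f (c + r • dir t) (dir t) * wave n t :=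
    (((contDiffOn_fderiv hU hC2).continuousOn.comp_continuous hcont h).clm_apply
      continuous_dir).mul (continuous_wave n)
  have c2 : Continuous fun t => fderiv ℝ (fderiv ℝ f) (c + r • dir t) (perp (dir t))
      (perp (dir t)) * wave n t :=
    ((((continuousOn_fderiv_fderiv hU hC2).comp_continuous hcont h).clm_apply
      continuous_perp_dir).clm_apply continuous_perp_dir).mul (continuous_wave n)
  -- integration of a periodic total derivative
  have hper : ∫ t in (0 : ℝ)..2 * π,
      ((r : ℂ) ^ 2 * (fderiv ℝ (fderiv ℝ f) (c + r • dir t) (perp (dir t)) (perp (dir t))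
          * wave n t)
        - (r : ℂ) * (fderiv ℝ f (c + r • dir t) (dir t) * wave n t)
        + (n : ℂ) ^ 2 * (f (c + r • dir t) * wave n t)) = 0 := by
    rw [intervalIntegral.integral_eq_sub_of_hasDerivAt (f := fun t =>
      (r * fderiv ℝ f (c + r • dir t) (perp (dir t)) + Complex.I * n * f (c + r • dir t))
        * wave n t)]
    · have e1 := dir_add_two_pi 0
      have e2 := wave_add_two_pi n 0
      rw [zero_add] at e1 e2
      simp only [e1, e2, sub_self]
    · intro t _
      have d2 := (((hasDerivAt_angular_comp_angular hU hC2 (h t)).const_mul (r : ℂ)).fun_add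
        ((hasDerivAt_comp_angular hU hC2 (h t)).const_mul (Complex.I * n))).fun_mul
        (hasDerivAt_wave n t)
      refine d2.congr_deriv ?_
      linear_combination (-(n : ℂ) ^ 2 * f (c + r • dir t) * wave n t) * Complex.I_sq
    · exact (((continuous_const.mul c2).sub (continuous_const.mul c1)).add
        (continuous_const.mul c0)).intervalIntegrable _ _
  have i0 := c0.intervalIntegrable (μ := volume) 0 (2 * π)
  have i1 := c1.intervalIntegrable (μ := volume) 0 (2 * π)
  have i2 := c2.intervalIntegrable (μ := volume) 0 (2 * π)
  rw [intervalIntegral.integral_add ((i2.const_mul _).sub (i1.const_mul _)) (i0.const_mul _),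
    intervalIntegral.integral_sub (i2.const_mul _) (i1.const_mul _),
    intervalIntegral.integral_const_mul, intervalIntegral.integral_const_mul,
    intervalIntegral.integral_const_mul] at hper
  have hrr : ∫ t in (0 : ℝ)..2 * π,
      fderiv ℝ (fderiv ℝ f) (c + r • dir t) (dir t) (dir t) * wave n t
      = -(κ : ℂ) ^ 2 * mode f c n r - ∫ t in (0 : ℝ)..2 * π,
        fderiv ℝ (fderiv ℝ f) (c + r • dir t) (perp (dir t)) (perp (dir t)) * wave n t := by
    rw [mode, ← intervalIntegral.integral_const_mul, ← intervalIntegral.integral_sub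
      (i0.const_mul _) i2]
    refine intervalIntegral.integral_congr fun t _ => ?_
    linear_combination wave n t * hf.frame hU (h t) (norm_dir t)
  rw [hrr]
  have hr0 : (r : ℂ) ≠ 0 := by exact_mod_cast hr.ne'
  change _ - (r : ℂ) * dmode f c n r + (n : ℂ) ^ 2 * mode f c n r = 0 at hper
  field_simp
  linear_combination hper

/-- A function whose angular modes on a circle all vanish is zero on that circle. -/
lemma eq_zero_of_mode_eq_zero {f : R2 → ℂ} {c : R2} {r : ℝ}
    (hf : Continuous fun t => f (c + r • dir t)) (h : ∀ n, mode f c n r = 0) (t : ℝ) :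
    f (c + r • dir t) = 0 := by
  have : Fact ((0 : ℝ) < 2 * π) := ⟨by positivity⟩
  have hp : Function.Periodic (fun t => f (c + r • dir t)) (2 * π) := fun t => by
    simp only [dir_add_two_pi]
  let g : C(AddCircle (2 * π), ℂ) := ⟨hp.lift, continuous_coinduced_dom.2 hf⟩
  have hg : ∀ t : ℝ, g (t : AddCircle (2 * π)) = f (c + r • dir t) := fun t => hp.lift_coe t
  have hz : fourierCoeff g = 0 := by
    funext n
    rw [fourierCoeff_eq_intervalIntegral g n 0]
    have : ∫ x in (0 : ℝ)..0 + 2 * π, (fourier (-n)) (x : AddCircle (2 * π)) •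
        g (x : AddCircle (2 * π)) = mode f c n r := by
      rw [zero_add, mode]
      refine intervalIntegral.integral_congr fun t _ => ?_
      simp only [hg, fourier_coe_apply, wave, smul_eq_mul]
      rw [mul_comm]
      congr 2
      have : (π : ℂ) ≠ 0 := by exact_mod_cast pi_ne_zero
      push_cast
      field_simp
    rw [this, h n]; simp
  have hs := has_pointwise_sum_fourier_series_of_summable (f := g)
    (by rw [hz]; exact summable_zero) (t : AddCircle (2 * π))
  rw [hz] at hs
  simp only [Pi.zero_apply, zero_smul, hg] at hs
  exact hs.unique hasSum_zero

/-- Forward uniqueness for Bessel's equation on an interval of positive radii. -/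
lemma bessel_eq_zero_of_eq_zero {κ : ℝ} {n : ℤ} {f g : ℝ → ℂ} {a b : ℝ} (ha : 0 < a)
    (hf : ∀ r ∈ Icc a b, HasDerivAt f (g r) r)
    (hg : ∀ r ∈ Icc a b, HasDerivAt g
      (-(g r) / r - ((κ : ℂ) ^ 2 - (n : ℂ) ^ 2 / (r : ℂ) ^ 2) * f r) r)
    (hfa : f a = 0) (hga : g a = 0) {r : ℝ} (hr : r ∈ Icc a b) : f r = 0 := by
  have hd : ∀ r ∈ Icc a b, HasDerivAt (fun r => (f r, g r))
      (g r, -(g r) / r - ((κ : ℂ) ^ 2 - (n : ℂ) ^ 2 / (r : ℂ) ^ 2) * f r) r :=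
    fun r hr => (hf r hr).prodMk (hg r hr)
  have key := norm_le_gronwallBound_of_norm_deriv_right_le
    (f := fun r => (f r, g r)) (δ := 0) (ε := 0)
    (K := 1 + 1 / a + (κ ^ 2 + (n : ℝ) ^ 2 / a ^ 2)) (a := a) (b := b)
    (fun r hr => (hd r hr).continuousAt.continuousWithinAt)
    (fun r hr => (hd r ⟨hr.1, hr.2.le⟩).hasDerivWithinAt) (by simp [hfa, hga]) (fun s hs => by
      have hs0 : 0 < s := ha.trans_le hs.1
      have h1 : ‖f s‖ ≤ ‖(f s, g s)‖ := norm_fst_le (f s, g s)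
      have h2 : ‖g s‖ ≤ ‖(f s, g s)‖ := norm_snd_le (f s, g s)
      set N := ‖(f s, g s)‖
      have hN : 0 ≤ N := norm_nonneg _
      have h3 : ‖-(g s) / s‖ ≤ 1 / a * N := by
        rw [norm_div, norm_neg, Complex.norm_of_nonneg hs0.le, div_eq_mul_one_div, mul_comm]
        gcongr
        exact hs.1
      have h4 : ‖((κ : ℂ) ^ 2 - (n : ℂ) ^ 2 / (s : ℂ) ^ 2) * f s‖
          ≤ (κ ^ 2 + (n : ℝ) ^ 2 / a ^ 2) * N := by
        rw [norm_mul]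
        gcongr
        refine (norm_sub_le _ _).trans ?_
        rw [norm_div, norm_pow, norm_pow, norm_pow, Complex.norm_of_nonneg hs0.le,
          Complex.norm_real, Complex.norm_intCast, norm_eq_abs, sq_abs, sq_abs]
        gcongr
        exact hs.1
      have h5 := norm_sub_le (-(g s) / s) (((κ : ℂ) ^ 2 - (n : ℂ) ^ 2 / (s : ℂ) ^ 2) * f s)
      rw [Prod.norm_mk, add_zero]
      have hp1 : 0 ≤ 1 / a * N := by positivity
      have hp2 : 0 ≤ (κ ^ 2 + (n : ℝ) ^ 2 / a ^ 2) * N := by positivity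
      refine max_le ?_ ?_ <;> nlinarith) r hr
  rw [gronwallBound_ε0_δ0, norm_le_zero_iff, Prod.mk_eq_zero] at key
  exact key.1

/-- A nonnegative function `E` tending to zero whose derivative is at least `-C E / r²` vanishes. -/
lemma eq_zero_of_deriv_ge_of_tendsto_zero {E E' : ℝ → ℝ} {R C : ℝ} (hR : 0 ≤ R)
    (hE : ∀ r ∈ Ioi R, HasDerivAt E (E' r) r) (h0 : ∀ r ∈ Ioi R, 0 ≤ E r)
    (hE' : ∀ r ∈ Ioi R, -(C / r ^ 2 * E r) ≤ E' r) (hlim : Tendsto E atTop (𝓝 0))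
    {r : ℝ} (hr : r ∈ Ioi R) : E r = 0 := by
  set F : ℝ → ℝ := fun r => E r * exp (-(C * r⁻¹))
  have hd : ∀ r ∈ Ioi R, HasDerivAt F ((E' r + C / r ^ 2 * E r) * exp (-(C * r⁻¹))) r := by
    intro r hr
    have hr0 : r ≠ 0 := (hR.trans_lt hr).ne'
    refine ((hE r hr).mul (((hasDerivAt_inv hr0).const_mul C).fun_neg.exp)).congr_deriv ?_
    ring
  have hmono : MonotoneOn F (Ioi R) := by
    refine monotoneOn_of_deriv_nonneg (convex_Ioi R)
      (fun r hr => (hd r hr).continuousAt.continuousWithinAt)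
      (fun r hr => (hd r (interior_subset hr)).differentiableAt.differentiableWithinAt)
      fun r hr => ?_
    rw [(hd r (interior_subset hr)).deriv]
    have := hE' r (interior_subset hr)
    exact mul_nonneg (by linarith) (exp_pos _).le
  have hF : Tendsto F atTop (𝓝 0) := by
    have h1 : Tendsto (fun r : ℝ => exp (-(C * r⁻¹))) atTop (𝓝 (exp (-(C * 0)))) :=
      (continuous_exp.tendsto _).comp ((tendsto_inv_atTop_zero.const_mul C).neg)
    simpa [F] using hlim.mul h1
  have hle : F r ≤ 0 := ge_of_tendsto hF ((eventually_ge_atTop r).mono fun s hs =>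
    hmono hr (lt_of_lt_of_le (mem_Ioi.1 hr) hs) hs)
  have h1 : E r ≤ 0 := by
    by_contra! h
    exact absurd hle (not_le.2 (mul_pos h (exp_pos _)))
  exact le_antisymm h1 (h0 r hr)

/-- Rellich's lemma: a solution of Bessel's equation that decays faster than `r ^ (-1/2)`
together with its derivative vanishes. -/
lemma bessel_eq_zero_of_tendsto_zero {κ : ℝ} (hκ : 0 < κ) {n : ℤ} {f g : ℝ → ℂ} {R : ℝ}
    (hR : 0 ≤ R) (hf : ∀ r ∈ Ioi R, HasDerivAt f (g r) r)
    (hg : ∀ r ∈ Ioi R, HasDerivAt g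
      (-(g r) / r - ((κ : ℂ) ^ 2 - (n : ℂ) ^ 2 / (r : ℂ) ^ 2) * f r) r)
    (hf0 : Tendsto (fun r => (√r : ℂ) * f r) atTop (𝓝 0))
    (hg0 : Tendsto (fun r => (√r : ℂ) * g r) atTop (𝓝 0)) {r : ℝ} (hr : r ∈ Ioi R) :
    f r = 0 := by
  set u : ℝ → ℂ := fun r => (√r : ℂ) * f r with hu
  set w : ℝ → ℂ := fun r => (√r : ℂ) * g r + ((1 / (2 * r) : ℝ) : ℂ) * u r with hw
  have hpos : ∀ r ∈ Ioi R, 0 < r := fun r hr => hR.trans_lt hr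
  have hs : ∀ r ∈ Ioi R, HasDerivAt (fun r => (√r : ℂ)) (((1 / (2 * r) : ℝ) : ℂ) * (√r : ℂ)) r := by
    intro r hr
    have h := (hasDerivAt_sqrt (hpos r hr).ne').ofReal_comp
    refine h.congr_deriv ?_
    rw [← Complex.ofReal_mul]
    congr 1
    have h1 := sq_sqrt (hpos r hr).le
    have h2 := sqrt_pos.2 (hpos r hr)
    have h3 := hpos r hr
    field_simp
    linarith
  have du : ∀ r ∈ Ioi R, HasDerivAt u (w r) r := by
    intro r hr
    refine ((hs r hr).mul (hf r hr)).congr_deriv ?_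
    simp only [hw, hu]; ring
  have dw : ∀ r ∈ Ioi R,
      HasDerivAt w ((-κ ^ 2 + ((n : ℝ) ^ 2 - 1 / 4) / r ^ 2 : ℝ) • u r) r := by
    intro r hr
    have h3 := hpos r hr
    have hi : HasDerivAt (fun r : ℝ => ((1 / (2 * r) : ℝ) : ℂ)) ((-(1 / (2 * r ^ 2)) : ℝ) : ℂ) r := by
      refine HasDerivAt.ofReal_comp ?_
      have := (hasDerivAt_inv h3.ne').const_mul (1 / 2 : ℝ)
      convert! this using 1
      · funext s; rw [one_div, mul_inv]; ring
      · field_simp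
    refine (((hs r hr).mul (hg r hr)).add (hi.mul (du r hr))).congr_deriv ?_
    have h4 : (r : ℂ) ≠ 0 := by exact_mod_cast h3.ne'
    simp only [hw, hu, Complex.real_smul]
    push_cast
    field_simp
    ring
  have hu0 : Tendsto u atTop (𝓝 0) := hf0
  have hw0 : Tendsto w atTop (𝓝 0) := by
    have h1 : Tendsto (fun r : ℝ => ((1 / (2 * r) : ℝ) : ℂ)) atTop (𝓝 ((0 : ℝ) : ℂ)) := by
      refine (Complex.continuous_ofReal.tendsto 0).comp ?_
      have := (tendsto_inv_atTop_zero (𝕜 := ℝ)).const_mul (1 / 2 : ℝ)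
      rw [mul_zero] at this
      refine this.congr fun s => ?_
      rw [one_div (2 * s), mul_inv]; ring
    have := hg0.add (h1.mul hu0)
    rwa [Complex.ofReal_zero, zero_mul, add_zero] at this
  have hE := eq_zero_of_deriv_ge_of_tendsto_zero (E := fun r => ‖w r‖ ^ 2 + κ ^ 2 * ‖u r‖ ^ 2)
    (C := |(n : ℝ) ^ 2 - 1 / 4| / κ) hR
    (fun r hr => (dw r hr).norm_sq.add ((du r hr).norm_sq.const_mul _))
    (fun r _ => by positivity) (fun r hr => by
      have h3 := hpos r hr
      rw [inner_smul_right, real_inner_comm (w r) (u r)]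
      have hb := abs_real_inner_le_norm (w r) (u r)
      set p := inner ℝ (w r) (u r)
      set c := (n : ℝ) ^ 2 - 1 / 4
      have e : 2 * ((-κ ^ 2 + c / r ^ 2) * p) + κ ^ 2 * (2 * p) = 2 * (c * p) / r ^ 2 := by ring
      rw [e]
      have h5 : |c * p| * (2 * κ) ≤ |c| * (‖w r‖ ^ 2 + κ ^ 2 * ‖u r‖ ^ 2) := by
        rw [abs_mul, mul_assoc]
        refine mul_le_mul_of_nonneg_left ?_ (abs_nonneg c)
        nlinarith [sq_nonneg (‖w r‖ - κ * ‖u r‖)]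
      have h6 := neg_abs_le (c * p)
      have h7 : 2 * |c * p| ≤ |c| / κ * (‖w r‖ ^ 2 + κ ^ 2 * ‖u r‖ ^ 2) := by
        rw [div_mul_eq_mul_div, le_div_iff₀ hκ]; linarith
      have h8 : -(|c| / κ * (‖w r‖ ^ 2 + κ ^ 2 * ‖u r‖ ^ 2)) ≤ 2 * (c * p) := by linarith
      have h9 := div_le_div_of_nonneg_right h8 (sq_nonneg r)
      refine le_trans (le_of_eq ?_) h9
      ring)
    (by simpa using (hw0.norm.pow 2).add ((hu0.norm.pow 2).const_mul (κ ^ 2))) hr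
  have h1 : κ ^ 2 * ‖u r‖ ^ 2 = 0 := by
    have := sq_nonneg ‖w r‖
    have h2 : 0 ≤ κ ^ 2 * ‖u r‖ ^ 2 := by positivity
    linarith
  have h2 : u r = 0 := by
    simpa [hκ.ne'] using h1
  have h3 : (√r : ℂ) ≠ 0 := by exact_mod_cast (sqrt_pos.2 (hpos r hr)).ne'
  exact (mul_eq_zero.1 h2).resolve_left h3

lemma fderiv_eq_zero_of_eventually_eq_zero {f : R2 → ℂ} {x : R2} (h : ∀ᶠ y in 𝓝 x, f y = 0) :
    fderiv ℝ f x = 0 := by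
  have h' : f =ᶠ[𝓝 x] fun _ => (0 : ℂ) := h
  rw [h'.fderiv_eq]; simp

/-- Unique continuation for the Helmholtz equation in a disc. -/
lemma IsHelmholtzOn.eq_zero_on_ball {κ : ℝ} {U : Set R2} (hU : IsOpen U) {f : R2 → ℂ}
    (hf : IsHelmholtzOn κ U f) {c : R2} {ρ : ℝ} (hρ : Metric.ball c ρ ⊆ U)
    (h : ∀ᶠ x in 𝓝 c, f x = 0) {x : R2} (hx : x ∈ Metric.ball c ρ) : f x = 0 := by
  obtain ⟨ε, hε, hεf⟩ := Metric.eventually_nhds_iff_ball.1 h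
  by_cases hxε : ‖x - c‖ < ε
  · exact hεf x (by rwa [Metric.mem_ball, dist_eq_norm])
  rw [Metric.mem_ball, dist_eq_norm] at hx
  have hcirc : ∀ r, 0 < r → r < ρ → ∀ t, c + r • dir t ∈ U := fun r h0 hr t => hρ (by
    rw [Metric.mem_ball, dist_eq_norm, add_sub_cancel_left, norm_smul, norm_dir, mul_one,
      norm_of_nonneg h0.le]; exact hr)
  have hsmall : ∀ t, c + (ε / 2) • dir t ∈ Metric.ball c ε := fun t => by
    rw [Metric.mem_ball, dist_eq_norm, add_sub_cancel_left, norm_smul, norm_dir, mul_one,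
      norm_of_nonneg (by positivity)]; linarith
  obtain ⟨t, ht⟩ := exists_polar c x
  rw [ht]
  have hpos : ∀ r ∈ Icc (ε / 2) ‖x - c‖, 0 < r := fun r hr => (half_pos hε).trans_le hr.1
  have hmem : ∀ r ∈ Icc (ε / 2) ‖x - c‖, ∀ t, c + r • dir t ∈ U := fun r hr =>
    hcirc r (hpos r hr) (hr.2.trans_lt hx)
  have hlast : ‖x - c‖ ∈ Icc (ε / 2) ‖x - c‖ := ⟨by linarith [not_lt.1 hxε], le_rfl⟩
  refine eq_zero_of_mode_eq_zero ?_ (fun n => ?_) t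
  · exact hf.contDiffOn.continuousOn.comp_continuous
      (continuous_const.add (continuous_dir.const_smul ‖x - c‖)) (hmem _ hlast)
  · refine bessel_eq_zero_of_eq_zero (f := mode f c n) (g := dmode f c n) (κ := κ) (n := n)
      (half_pos hε)
      (fun r hr => hasDerivAt_mode hU hf.contDiffOn (hmem r hr) n)
      (fun r hr => hasDerivAt_dmode hU hf (hpos r hr) (hmem r hr) n) ?_ ?_ hlast
    · simp only [mode, hεf _ (hsmall _), zero_mul, intervalIntegral.integral_zero]
    · have hz : ∀ t, fderiv ℝ f (c + (ε / 2) • dir t) = 0 := fun t =>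
        fderiv_eq_zero_of_eventually_eq_zero
          (Filter.eventually_of_mem (Metric.isOpen_ball.mem_nhds (hsmall t)) hεf)
      simp only [dmode, hz, zero_apply, zero_mul, intervalIntegral.integral_zero]

/-- Unique continuation for the Helmholtz equation in a connected set. -/
lemma IsHelmholtzOn.eq_zero_of_eventually {κ : ℝ} {U : Set R2} (hU : IsOpen U)
    (hUc : IsPreconnected U) {f : R2 → ℂ} (hf : IsHelmholtzOn κ U f) {c : R2} (hc : c ∈ U)
    (h : ∀ᶠ x in 𝓝 c, f x = 0) {x : R2} (hx : x ∈ U) : f x = 0 := by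
  have hsub : U ⊆ {x | ∀ᶠ y in 𝓝 x, f y = 0} := by
    refine hUc.subset_of_closure_inter_subset isOpen_setOfPred_eventually_nhds ⟨c, hc, h⟩ ?_
    rintro x ⟨hxc, hxU⟩
    obtain ⟨ρ, hρ, hρU⟩ := Metric.isOpen_iff.1 hU x hxU
    obtain ⟨y, hy, hxy⟩ := Metric.mem_closure_iff.1 hxc (ρ / 2) (half_pos hρ)
    have hb : Metric.ball y (ρ / 2) ⊆ U := fun z hz => hρU (by
      rw [Metric.mem_ball] at hz ⊢
      rw [dist_comm] at hxy
      linarith [dist_triangle z y x])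
    exact Filter.eventually_of_mem (Metric.isOpen_ball.mem_nhds (Metric.mem_ball.2 hxy))
      fun z hz => hf.eq_zero_on_ball hU hb hy hz
  exact (hsub hx).self_of_nhds

lemma HasFDerivAt.indicator_of_eq_zero {E F : Type*} [NormedAddCommGroup E] [NormedSpace ℝ E]
    [NormedAddCommGroup F] [NormedSpace ℝ F] {g : E → F} {x : E} (hg : HasFDerivAt g (0 : E →L[ℝ] F) x)
    (hx : g x = 0) (P : Set E) : HasFDerivAt (P.indicator g) (0 : E →L[ℝ] F) x := by
  rw [hasFDerivAt_iff_isLittleO] at hg ⊢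
  have h0 : P.indicator g x = 0 := by
    by_cases h : x ∈ P <;> simp [h, hx]
  simp only [hx, h0, sub_zero, zero_apply] at hg ⊢
  exact (Asymptotics.isBigO_of_le _ fun y => norm_indicator_le_norm_self g y).trans_isLittleO hg

lemma tendsto_indicator_zero {E F : Type*} [NormedAddCommGroup F] {g : E → F} {l : Filter E}
    (hg : Tendsto g l (𝓝 0)) (P : Set E) : Tendsto (P.indicator g) l (𝓝 0) :=
  squeeze_zero_norm (fun y => norm_indicator_le_norm_self g y)
    (tendsto_zero_iff_norm_tendsto_zero.1 hg)

lemma inner_self_of_norm_one {n : R2} (hn : ‖n‖ = 1) : inner ℝ n n = (1 : ℝ) := by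
  rw [real_inner_self_eq_norm_sq, hn]; norm_num

lemma inner_perp_right (n : R2) : inner ℝ n (perp n) = (0 : ℝ) := by
  rw [R2_inner]; simp; ring

lemma eq_smul_add_smul_perp {n : R2} (hn : ‖n‖ = 1) (u : R2) :
    u = (inner ℝ n u : ℝ) • n + (inner ℝ (perp n) u : ℝ) • perp n := by
  have h := R2_norm_sq n
  rw [hn] at h
  apply R2_ext <;> simp [R2_inner]
  · linear_combination (u 0) * h
  · linear_combination (u 1) * h

lemma refl2_of_inner_eq_zero {x₀ n x : R2} (h : inner ℝ n (x - x₀) = (0 : ℝ)) :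
    refl2 x₀ n x = x := by
  simp [refl2, reflCLM_apply, h]

lemma eventually_line_mem {V : Set R2} (hV : IsOpen V) {x : R2} (hx : x ∈ V) (u : R2) :
    ∀ᶠ s : ℝ in 𝓝 0, x + s • u ∈ V := by
  have : ContinuousAt (fun s : ℝ => x + s • u) 0 := by fun_prop
  exact this.eventually (hV.mem_nhds (by simpa using hx))

lemma hasFDerivAt_apply_eq_zero_of_line {F : Type*} [NormedAddCommGroup F] [NormedSpace ℝ F]
    {g : R2 → F} {D : R2 →L[ℝ] F} {x u : R2} (hg : HasFDerivAt g D x)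
    (h : ∀ᶠ s : ℝ in 𝓝 0, g (x + s • u) = 0) : D u = 0 := by
  have h1 : HasDerivAt (fun s : ℝ => x + s • u) u 0 := by
    simpa using ((hasDerivAt_id (0 : ℝ)).smul_const u).const_add x
  have h2 : HasDerivAt (fun s : ℝ => g (x + s • u)) (D u) 0 :=
    HasFDerivAt.comp_hasDerivAt (0 : ℝ) (by simpa using hg) h1
  have h3 : HasDerivAt (fun s : ℝ => g (x + s • u)) 0 0 :=
    (hasDerivAt_const (0 : ℝ) (0 : F)).congr_of_eventuallyEq h
  exact h2.unique h3

/-- A Helmholtz solution, even about a line and zero on it, has vanishing derivatives up to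
second order on that line. -/
lemma IsHelmholtzOn.fderiv_eq_zero_of_even {κ : ℝ} {V : Set R2} (hV : IsOpen V) {v : R2 → ℂ}
    (hv : IsHelmholtzOn κ V v) {x₀ n : R2} (hn : ‖n‖ = 1)
    (heven : ∀ x ∈ V, v (refl2 x₀ n x) = v x)
    (hzero : ∀ x ∈ V, inner ℝ n (x - x₀) = (0 : ℝ) → v x = 0) {x : R2} (hx : x ∈ V)
    (hxL : inner ℝ n (x - x₀) = (0 : ℝ)) :
    fderiv ℝ v x = 0 ∧ fderiv ℝ (fderiv ℝ v) x = 0 := by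
  have hline : ∀ (x : R2) (s : ℝ), inner ℝ n (x - x₀) = (0 : ℝ) →
      inner ℝ n (x + s • perp n - x₀) = (0 : ℝ) := fun x s h => by
    rw [add_sub_right_comm, inner_add_right, h, inner_smul_right, inner_perp_right]; simp
  have hD1 : ∀ x ∈ V, inner ℝ n (x - x₀) = (0 : ℝ) → fderiv ℝ v x = 0 := by
    intro x hx hxL
    have hd := hasFDerivAt_of_contDiffOn hV hv.contDiffOn hx
    have ht : fderiv ℝ v x (perp n) = 0 := hasFDerivAt_apply_eq_zero_of_line hd
      ((eventually_line_mem hV hx (perp n)).mono fun s hs => hzero _ hs (hline x s hxL))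
    have hσ := refl2_of_inner_eq_zero hxL
    have hc : HasFDerivAt (fun y => v (refl2 x₀ n y)) ((fderiv ℝ v x).comp (reflCLM n)) x :=
      HasFDerivAt.comp x (by rw [hσ]; exact hd) (hasFDerivAt_refl2 x₀ n x)
    have hc' := hd.congr_of_eventuallyEq (f₁ := fun y => v (refl2 x₀ n y))
      (Filter.eventually_of_mem (hV.mem_nhds hx) heven)
    have hnn : fderiv ℝ v x n = 0 := by
      have := DFunLike.congr_fun (hc.unique hc') n
      rw [ContinuousLinearMap.comp_apply, reflCLM_apply, inner_self_of_norm_one hn, mul_one,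
        two_smul, sub_add_cancel_left, map_neg] at this
      linear_combination (-1 / 2 : ℂ) * this
    ext u
    rw [eq_smul_add_smul_perp hn u, map_add, map_smul, map_smul, ht, hnn]; simp
  refine ⟨hD1 x hx hxL, ?_⟩
  set B := fderiv ℝ (fderiv ℝ v) x
  have ht : B (perp n) = 0 := hasFDerivAt_apply_eq_zero_of_line
    (hasFDerivAt_fderiv_of_contDiffOn hV hv.contDiffOn hx)
      ((eventually_line_mem hV hx (perp n)).mono fun s hs => hD1 _ hs (hline x s hxL))
  have hs : ∀ a b, B a b = B b a := fun a b =>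
    ((hv.contDiffOn.contDiffAt (hV.mem_nhds hx)).isSymmSndFDerivAt (by simp)).eq a b
  have hnn : B n n = 0 := by
    have h := hv.frame hV hx hn
    rw [hzero x hx hxL] at h
    change B n n + B (perp n) (perp n) = _ at h
    rw [ht] at h
    simpa using h
  have hnt : B n (perp n) = 0 := by rw [hs, ht]; simp
  ext u w
  rw [eq_smul_add_smul_perp hn u, eq_smul_add_smul_perp hn w]
  simp [ht, hnn, hnt]

/-- A Helmholtz solution, even about a line and zero on it, vanishes near that line. -/
lemma IsHelmholtzOn.eventually_eq_zero_of_even {κ : ℝ} {V : Set R2} (hV : IsOpen V) {v : R2 → ℂ}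
    (hv : IsHelmholtzOn κ V v) {x₀ n : R2} (hn : ‖n‖ = 1)
    (heven : ∀ x ∈ V, v (refl2 x₀ n x) = v x)
    (hzero : ∀ x ∈ V, inner ℝ n (x - x₀) = (0 : ℝ) → v x = 0) {x₁ : R2} (hx₁ : x₁ ∈ V)
    (hxL : inner ℝ n (x₁ - x₀) = (0 : ℝ)) : ∀ᶠ x in 𝓝 x₁, v x = 0 := by
  set P : Set R2 := {x | 0 < inner ℝ n (x - x₀)} with hP
  have hcont : Continuous fun x : R2 => (inner ℝ n (x - x₀) : ℝ) := by fun_prop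
  have hPo : IsOpen P := isOpen_lt continuous_const hcont
  have hNo : IsOpen {x : R2 | (inner ℝ n (x - x₀) : ℝ) < 0} := isOpen_lt hcont continuous_const
  have hpos : ∀ {F : Type} [Zero F] (g : R2 → F) (x : R2), 0 < (inner ℝ n (x - x₀) : ℝ) →
      P.indicator g =ᶠ[𝓝 x] g := fun g x hx =>
    Filter.eventually_of_mem (hPo.mem_nhds hx) fun y hy => indicator_of_mem hy g
  have hneg : ∀ {F : Type} [Zero F] (g : R2 → F) (x : R2), (inner ℝ n (x - x₀) : ℝ) < 0 →
      P.indicator g =ᶠ[𝓝 x] fun _ => 0 := fun g x hx =>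
    Filter.eventually_of_mem (hNo.mem_nhds hx) fun y hy =>
      indicator_of_notMem (s := P) (fun h : 0 < (inner ℝ n (y - x₀) : ℝ) => lt_asymm hy h) g
  have hD := fun x hx h => hv.fderiv_eq_zero_of_even hV hn heven hzero (x := x) hx h
  have hw : IsHelmholtzOn κ V (P.indicator v) := by
    refine IsHelmholtzOn.of_hasFDerivAt hV (D := P.indicator (fderiv ℝ v))
      (D2 := P.indicator (fderiv ℝ (fderiv ℝ v))) (fun x hx => ?_) (fun x hx => ?_)
      (fun x hx => ContinuousAt.continuousWithinAt ?_) (fun x hx => ?_)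
    · have hd := hasFDerivAt_of_contDiffOn hV hv.contDiffOn hx
      rcases lt_trichotomy (inner ℝ n (x - x₀) : ℝ) 0 with h | h | h
      · rw [(hneg (fderiv ℝ v) x h).self_of_nhds]
        exact (hasFDerivAt_const (0 : ℂ) x).congr_of_eventuallyEq (hneg v x h)
      · rw [indicator_of_notMem (by simp [hP, h])]
        rw [(hD x hx h).1] at hd
        exact hd.indicator_of_eq_zero (hzero x hx h) P
      · rw [(hpos (fderiv ℝ v) x h).self_of_nhds]
        exact hd.congr_of_eventuallyEq (hpos v x h)
    · have hd := hasFDerivAt_fderiv_of_contDiffOn hV hv.contDiffOn hx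
      rcases lt_trichotomy (inner ℝ n (x - x₀) : ℝ) 0 with h | h | h
      · rw [(hneg (fderiv ℝ (fderiv ℝ v)) x h).self_of_nhds]
        exact (hasFDerivAt_const (0 : R2 →L[ℝ] ℂ) x).congr_of_eventuallyEq
          (hneg (fderiv ℝ v) x h)
      · rw [indicator_of_notMem (by simp [hP, h])]
        rw [(hD x hx h).2] at hd
        exact hd.indicator_of_eq_zero (hD x hx h).1 P
      · rw [(hpos (fderiv ℝ (fderiv ℝ v)) x h).self_of_nhds]
        exact hd.congr_of_eventuallyEq (hpos (fderiv ℝ v) x h)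
    · have hd := (continuousOn_fderiv_fderiv hV hv.contDiffOn).continuousAt (hV.mem_nhds hx)
      rcases lt_trichotomy (inner ℝ n (x - x₀) : ℝ) 0 with h | h | h
      · exact continuousAt_const.congr (hneg (fderiv ℝ (fderiv ℝ v)) x h).symm
      · have hd' : Tendsto (fderiv ℝ (fderiv ℝ v)) (𝓝 x) (𝓝 0) := by
          have := hd.tendsto
          rwa [(hD x hx h).2] at this
        rw [ContinuousAt, indicator_of_notMem (by simp [hP, h])]
        exact tendsto_indicator_zero (E := R2) (F := R2 →L[ℝ] R2 →L[ℝ] ℂ) hd' P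
      · exact hd.congr (hpos (fderiv ℝ (fderiv ℝ v)) x h).symm
    · by_cases h : x ∈ P
      · simp only [indicator_of_mem h]
        exact hv.sum_eq hV hx
      · simp [indicator_of_notMem h]
  obtain ⟨ρ, hρ, hρV⟩ := Metric.isOpen_iff.1 hV x₁ hx₁
  have hx₂ : x₁ + (-(ρ / 2)) • n ∈ Metric.ball x₁ ρ := by
    rw [Metric.mem_ball, dist_eq_norm, add_sub_cancel_left, norm_smul, hn, norm_neg, mul_one,
      norm_of_nonneg (half_pos hρ).le]
    linarith
  have hx₂n : (inner ℝ n (x₁ + (-(ρ / 2)) • n - x₀) : ℝ) < 0 := by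
    rw [add_sub_right_comm, inner_add_right, hxL, inner_smul_right, inner_self_of_norm_one hn]
    linarith
  have hwz : ∀ x ∈ Metric.ball x₁ ρ, P.indicator v x = 0 := fun x hx =>
    (hw.mono hρV).eq_zero_of_eventually Metric.isOpen_ball
      (convex_ball x₁ ρ).isPreconnected hx₂ (hneg v _ hx₂n) hx
  refine Filter.eventually_of_mem (Metric.ball_mem_nhds x₁ hρ) fun x hx => ?_
  have hpz : ∀ x ∈ Metric.ball x₁ ρ, 0 < (inner ℝ n (x - x₀) : ℝ) → v x = 0 := fun x hx h => by
    have := hwz x hx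
    rwa [indicator_of_mem (show x ∈ P from h)] at this
  rcases lt_trichotomy (inner ℝ n (x - x₀) : ℝ) 0 with h | h | h
  · rw [← heven x (hρV hx)]
    refine hpz _ ?_ (by rw [inner_refl2 hn]; linarith)
    rw [Metric.mem_ball, dist_eq_norm] at hx ⊢
    rwa [← refl2_of_inner_eq_zero hxL, refl2_sub, norm_reflCLM hn]
  · exact hzero x (hρV hx) h
  · exact hpz x hx h

/-- The Sommerfeld radiation condition with respect to the origin `q`. -/
def RadiatesFrom (κ : ℝ) (q : R2) (g : R2 → ℂ) : Prop :=
  ∀ ε > 0, ∃ R > 0, ∀ x, R ≤ ‖x - q‖ →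
    ‖(√‖x - q‖ : ℂ) *
      (fderiv ℝ g x (‖x - q‖⁻¹ • (x - q)) - Complex.I * (κ : ℂ) * g x)‖ < ε

lemma isOpen_exterior (q : R2) (R : ℝ) : IsOpen {x : R2 | R < ‖x - q‖} :=
  isOpen_lt continuous_const (by fun_prop)

/-- A radiating function grows at most like the square root of the distance. -/
lemma RadiatesFrom.norm_le {κ : ℝ} {q : R2} {g : R2 → ℂ} (h : RadiatesFrom κ q g) {R₀ : ℝ}
    (hg : ContDiffOn ℝ 2 g {x | R₀ < ‖x - q‖}) :
    ∃ C > 0, ∃ R > 0, ∀ x, R ≤ ‖x - q‖ → ‖g x‖ ≤ C * √‖x - q‖ := by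
  obtain ⟨R₁, hR₁, h₁⟩ := h 1 one_pos
  set R := max R₁ (R₀ + 1)
  have hR : 0 < R := hR₁.trans_le (le_max_left _ _)
  have hRR₀ : R₀ < R := (lt_add_one R₀).trans_le (le_max_right _ _)
  have hnorm : ∀ s t, 0 ≤ s → ‖q + s • dir t - q‖ = s := fun s t hs => by
    rw [add_sub_cancel_left, norm_smul, norm_dir, mul_one, norm_of_nonneg hs]
  obtain ⟨M, hM⟩ := (isCompact_sphere q R).exists_bound_of_continuousOn
    (hg.continuousOn.mono fun x hx => by
      rw [mem_sphere_iff_norm] at hx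
      simpa [hx] using hRR₀)
  have hM0 : 0 ≤ M := (norm_nonneg _).trans (hM (q + R • dir 0) (by
    rw [mem_sphere_iff_norm, hnorm R 0 hR.le]))
  refine ⟨M / √R + 2, by positivity, R, hR, fun x hx => ?_⟩
  obtain ⟨t, ht⟩ := exists_polar q x
  set ρ := ‖x - q‖
  have hd : ∀ s ∈ Icc R ρ, HasDerivAt
      (fun s : ℝ => Complex.exp (-(Complex.I * κ * s)) * g (q + s • dir t))
      (Complex.exp (-(Complex.I * κ * s)) *
        (fderiv ℝ g (q + s • dir t) (dir t) - Complex.I * κ * g (q + s • dir t))) s := by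
    intro s hs
    have hs0 : 0 ≤ s := hR.le.trans hs.1
    have e1 : HasDerivAt (fun s : ℝ => -(Complex.I * κ * (s : ℂ))) (-(Complex.I * κ * 1)) s :=
      ((Complex.ofRealCLM.hasDerivAt (x := s)).const_mul _).neg
    have e2 := (hasFDerivAt_of_contDiffOn (isOpen_exterior q R₀) hg
      (x := q + s • dir t) (by
        simp only [mem_ofPred, hnorm s t hs0]; exact hRR₀.trans_le hs.1)).comp_hasDerivAt s
      (hasDerivAt_radial q t s)
    refine (e1.cexp.mul e2).congr_deriv ?_
    simp only [Function.comp_apply]; ring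
  have hn : ∀ s : ℝ, ‖Complex.exp (-(Complex.I * κ * s))‖ = 1 := fun s => by
    rw [Complex.norm_exp]; simp
  have hsq : ∀ s ∈ Icc R ρ, HasDerivAt (fun s => M + (2 * √s - 2 * √R)) (1 / √s) s := by
    intro s hs
    have hs0 : 0 < s := hR.trans_le hs.1
    refine ((((hasDerivAt_sqrt hs0.ne').const_mul 2).sub_const _).const_add M).congr_deriv ?_
    have := sqrt_pos.2 hs0
    field_simp
  have key := image_norm_le_of_norm_deriv_right_le_deriv_boundary'
    (a := R) (b := ρ) (fun s hs => (hd s hs).continuousAt.continuousWithinAt)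
    (fun s hs => (hd s ⟨hs.1, hs.2.le⟩).hasDerivWithinAt)
    (B := fun s => M + (2 * √s - 2 * √R)) (B' := fun s => 1 / √s)
    (by
      rw [norm_mul, hn, one_mul, sub_self, add_zero]
      exact hM _ (by rw [mem_sphere_iff_norm, hnorm R t hR.le]))
    (fun s hs => (hsq s hs).continuousAt.continuousWithinAt)
    (fun s hs => (hsq s ⟨hs.1, hs.2.le⟩).hasDerivWithinAt)
    (fun s hs => by
      have hs0 : 0 < s := hR.trans_le hs.1
      have hb := h₁ (q + s • dir t) (by
        rw [hnorm s t hs0.le]; exact (le_max_left _ _).trans hs.1)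
      rw [hnorm s t hs0.le, add_sub_cancel_left, smul_smul, inv_mul_cancel₀ hs0.ne', one_smul,
        norm_mul, Complex.norm_of_nonneg (sqrt_nonneg s)] at hb
      rw [norm_mul, hn, one_mul, le_div_iff₀ (sqrt_pos.2 hs0), mul_comm]
      exact hb.le) (show ρ ∈ Icc R ρ from ⟨hx, le_rfl⟩)
  rw [norm_mul, hn, one_mul, ← ht] at key
  have h1 : M ≤ M / √R * √ρ := by
    rw [div_mul_eq_mul_div, le_div_iff₀ (sqrt_pos.2 hR)]
    exact mul_le_mul_of_nonneg_left (sqrt_le_sqrt hx) hM0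
  have := sqrt_nonneg R
  linarith

set_option maxHeartbeats 800000 in
/-- Pointwise comparison of the radiation conditions about two different origins, up to a
total angular derivative. -/
lemma radiation_defect_bound {κ Q r a b s ε C : ℝ} {n : ℤ} {G P D η : ℂ} (hκ : 0 < κ)
    (hQ : 0 ≤ Q) (hr : 2 * Q + 1 ≤ r) (ha : |a| ≤ Q) (hb : |b| ≤ Q) (hs0 : 0 < s)
    (hs : s ^ 2 = (r - a) ^ 2 + b ^ 2)
    (hη : (s : ℂ) * (η + Complex.I * κ * G) = (r - a) * D - b * P)
    (hηε : ‖(√s : ℂ) * η‖ ≤ ε) (hG : ‖G‖ ≤ C * √r) :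
    ‖(√r : ℂ) * (D - Complex.I * κ * G
      - (((-a * (r - a) + b ^ 2) / (r * (r - a) ^ 2) : ℝ) * G
        + ((b / (r * (r - a)) : ℝ) : ℂ) * (r * P)
        + ((b / (r * (r - a)) : ℝ) : ℂ) * (-(Complex.I * n)) * G))‖
      ≤ C * (4 * Q ^ 2 * κ + 4 * Q + 2 * Q * |(n : ℝ)|) / r + 4 * ε := by
  have hr0 : 0 < r := by linarith
  obtain ⟨ha1, ha2⟩ := abs_le.1 ha
  obtain ⟨hb1, hb2⟩ := abs_le.1 hb
  have hra : r / 2 ≤ r - a := by linarith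
  have hra0 : 0 < r - a := by linarith
  have hb2' : b ^ 2 ≤ Q ^ 2 := by nlinarith
  have hsra : r - a ≤ s := by nlinarith [sq_nonneg b]
  set m := b / (r * (r - a)) with hm
  set m' := (-a * (r - a) + b ^ 2) / (r * (r - a) ^ 2) with hm'
  have bm : |m| ≤ 2 * Q / r ^ 2 := by
    rw [hm, abs_div, abs_of_pos (mul_pos hr0 hra0), div_le_div_iff₀ (by positivity) (by positivity)]
    nlinarith [mul_le_mul_of_nonneg_left hra (mul_nonneg hQ hr0.le), sq_nonneg r,
      mul_le_mul_of_nonneg_right hb (sq_nonneg r)]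
  have bm' : |m'| ≤ 4 * Q / r ^ 2 := by
    have e : |m'| ≤ (Q * (r - a) + Q * (r - a)) / (r * (r - a) ^ 2) := by
      rw [hm', abs_div, abs_of_pos (a := r * (r - a) ^ 2) (by positivity)]
      gcongr
      refine (abs_add_le _ _).trans (add_le_add ?_ ?_)
      · rw [abs_mul, abs_neg, abs_of_pos hra0]; gcongr
      · rw [abs_of_nonneg (sq_nonneg b)]; nlinarith
    refine e.trans ?_
    have e2 : (Q * (r - a) + Q * (r - a)) / (r * (r - a) ^ 2) = 2 * Q / (r * (r - a)) := by
      field_simp; ring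
    rw [e2, div_le_div_iff₀ (by positivity) (by positivity)]
    nlinarith [mul_le_mul_of_nonneg_left hra (mul_nonneg hQ hr0.le)]
  have bs : |s / (r - a) - 1| ≤ 4 * Q ^ 2 / r ^ 2 := by
    rw [abs_of_nonneg (by rw [sub_nonneg, le_div_iff₀ hra0]; linarith)]
    have e1 : s / (r - a) - 1 ≤ b ^ 2 / (r - a) ^ 2 := by
      rw [div_sub_one hra0.ne', div_le_div_iff₀ hra0 (by positivity)]
      have e3 : (s - (r - a)) * (r - a) ≤ b ^ 2 := by nlinarith
      nlinarith
    refine e1.trans ?_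
    rw [div_le_div_iff₀ (by positivity) (by positivity)]
    have e4 : r ^ 2 ≤ 4 * (r - a) ^ 2 := by nlinarith
    nlinarith [mul_le_mul hb2' e4 (sq_nonneg r) (sq_nonneg Q)]
  have bs2 : |s / (r - a)| ≤ 2 := by
    rw [abs_of_pos (div_pos hs0 hra0), div_le_iff₀ hra0]
    have : b ^ 2 ≤ (r - a) ^ 2 := by nlinarith
    nlinarith
  have bη : √r * ‖η‖ ≤ 2 * ε := by
    rw [norm_mul, Complex.norm_of_nonneg (sqrt_nonneg s)] at hηε
    have e : √r ≤ 2 * √s := by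
      rw [show (2 : ℝ) = √4 by rw [show (4 : ℝ) = 2 ^ 2 by norm_num, sqrt_sq (by norm_num)],
        ← sqrt_mul (by norm_num)]
      exact sqrt_le_sqrt (by linarith)
    nlinarith [mul_le_mul_of_nonneg_right e (norm_nonneg η)]
  have id : D - Complex.I * κ * G - ((m' : ℂ) * G + (m : ℂ) * (r * P)
        + (m : ℂ) * (-(Complex.I * n)) * G)
      = ((s / (r - a) - 1 : ℝ) : ℂ) * (Complex.I * κ * G) + ((s / (r - a) : ℝ) : ℂ) * η
        - (m' : ℂ) * G + (m : ℂ) * (Complex.I * n) * G := by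
    have c1 : (r : ℂ) ≠ 0 := by exact_mod_cast hr0.ne'
    have c2 : (r : ℂ) - a ≠ 0 := by exact_mod_cast hra0.ne'
    rw [hm]
    push_cast
    field_simp
    linear_combination (-(r : ℂ)) * hη
  clear_value m m'
  rw [id, norm_mul, Complex.norm_of_nonneg (sqrt_nonneg r)]
  have n1 : ‖((s / (r - a) - 1 : ℝ) : ℂ) * (Complex.I * κ * G)‖
      ≤ 4 * Q ^ 2 / r ^ 2 * (κ * (C * √r)) := by
    rw [norm_mul, norm_mul, norm_mul, Complex.norm_I, one_mul, Complex.norm_real,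
      Complex.norm_of_nonneg hκ.le, norm_eq_abs]
    gcongr
  have n2 : ‖((s / (r - a) : ℝ) : ℂ) * η‖ ≤ 2 * ‖η‖ := by
    rw [norm_mul, Complex.norm_real, norm_eq_abs]
    gcongr
  have n3 : ‖(m' : ℂ) * G‖ ≤ 4 * Q / r ^ 2 * (C * √r) := by
    rw [norm_mul, Complex.norm_real, norm_eq_abs]
    gcongr
  have n4 : ‖(m : ℂ) * (Complex.I * n) * G‖ ≤ 2 * Q / r ^ 2 * |(n : ℝ)| * (C * √r) := by
    rw [norm_mul, norm_mul, norm_mul, Complex.norm_I, one_mul, Complex.norm_real,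
      Complex.norm_intCast, norm_eq_abs]
    gcongr
  have tri := (norm_add_le (((s / (r - a) - 1 : ℝ) : ℂ) * (Complex.I * κ * G)
    + ((s / (r - a) : ℝ) : ℂ) * η - (m' : ℂ) * G) ((m : ℂ) * (Complex.I * n) * G)).trans
    (add_le_add_left ((norm_sub_le _ _).trans (add_le_add_left (norm_add_le _ _) _)) _)
  refine (mul_le_mul_of_nonneg_left (tri.trans
    (add_le_add (add_le_add (add_le_add n1 n2) n3) n4)) (sqrt_nonneg r)).trans ?_
  have hrr : √r * √r = r := mul_self_sqrt hr0.le
  have e : √r * (4 * Q ^ 2 / r ^ 2 * (κ * (C * √r)) + 2 * ‖η‖ + 4 * Q / r ^ 2 * (C * √r)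
      + 2 * Q / r ^ 2 * |(n : ℝ)| * (C * √r))
      = C * (4 * Q ^ 2 * κ + 4 * Q + 2 * Q * |(n : ℝ)|) / r + 2 * (√r * ‖η‖) := by
    field_simp
    linear_combination (C * (4 * Q ^ 2 * κ + 4 * Q + 2 * Q * |(n : ℝ)|)) * hrr
  rw [e]
  linarith

lemma hasDerivAt_inner_dir (q : R2) (t : ℝ) :
    HasDerivAt (fun t => (inner ℝ q (dir t) : ℝ)) (inner ℝ q (perp (dir t))) t :=
  ((innerSL ℝ q).hasFDerivAt.comp_hasDerivAt t (hasDerivAt_dir t))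

lemma hasDerivAt_inner_perp_dir (q : R2) (t : ℝ) :
    HasDerivAt (fun t => (inner ℝ q (perp (dir t)) : ℝ)) (-inner ℝ q (dir t)) t := by
  have := ((innerSL ℝ q).hasFDerivAt.comp_hasDerivAt t (hasDerivAt_perp_dir t))
  simpa [Function.comp_def] using this

lemma smul_dir_sub (q : R2) (r t : ℝ) :
    r • dir t - q = (r - inner ℝ q (dir t)) • dir t - (inner ℝ q (perp (dir t)) : ℝ) • perp (dir t) := by
  have h := eq_smul_add_smul_perp (norm_dir t) q
  rw [real_inner_comm, real_inner_comm q (perp (dir t))] at h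
  nth_rewrite 1 [h]
  rw [sub_smul]; abel

lemma norm_smul_dir_sub_sq (q : R2) (r t : ℝ) :
    ‖r • dir t - q‖ ^ 2 = (r - inner ℝ q (dir t)) ^ 2 + (inner ℝ q (perp (dir t)) : ℝ) ^ 2 := by
  rw [smul_dir_sub, R2_norm_sq]
  simp only [PiLp.sub_apply, PiLp.smul_apply, smul_eq_mul, perp_zero_apply, perp_one_apply,
    dir_zero_apply, dir_one_apply]
  set a : ℝ := inner ℝ q (dir t)
  set b : ℝ := inner ℝ q (perp (dir t))
  linear_combination ((r - a) ^ 2 + b ^ 2) * sin_sq_add_cos_sq t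

set_option maxHeartbeats 800000 in
/-- The angular modes about `0` of a function radiating from any point satisfy the radiation
condition. -/
lemma RadiatesFrom.tendsto_mode {κ : ℝ} (hκ : 0 < κ) {q : R2} {g : R2 → ℂ}
    (h : RadiatesFrom κ q g) {R₀ : ℝ} (hg : ContDiffOn ℝ 2 g {x | R₀ < ‖x‖}) (n : ℤ) :
    Tendsto (fun r : ℝ => (√r : ℂ) * (dmode g 0 n r - Complex.I * κ * mode g 0 n r)) atTop
      (𝓝 0) := by
  have hopen : IsOpen {x : R2 | R₀ < ‖x‖} := isOpen_lt continuous_const continuous_norm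
  set Q := ‖q‖
  have hQ : 0 ≤ Q := norm_nonneg q
  obtain ⟨C, hC, R₁, hR₁, hCg⟩ := h.norm_le (R₀ := R₀ + Q) (hg.mono fun x hx => by
    have hx' : R₀ + Q < ‖x - q‖ := hx
    have := norm_sub_le x q
    show R₀ < ‖x‖
    linarith)
  set K := 2 * C * (4 * Q ^ 2 * κ + 4 * Q + 2 * Q * |(n : ℝ)|) with hK
  rw [Metric.tendsto_atTop']
  intro ε hε
  have hπ := pi_pos
  set δ := ε / (20 * π) with hδ
  have hδ0 : 0 < δ := by positivity
  obtain ⟨R₂, hR₂, hrad⟩ := h δ hδ0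
  refine ⟨max (max (R₁ + Q) (R₂ + Q)) (max (2 * Q + 1) (max R₀ (K / δ))), fun r hr => ?_⟩
  simp only [gt_iff_lt, max_lt_iff] at hr
  obtain ⟨⟨hr1, hr2⟩, hr3, hr4, hr5⟩ := hr
  have hr0 : 0 < r := by linarith
  have hmem : ∀ t, (0 : R2) + r • dir t ∈ {x : R2 | R₀ < ‖x‖} := fun t => by
    show R₀ < ‖(0 : R2) + r • dir t‖
    rw [zero_add, norm_smul, norm_dir, mul_one, norm_of_nonneg hr0.le]; exact hr4
  set a : ℝ → ℝ := fun t => inner ℝ q (dir t) with ha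
  set b : ℝ → ℝ := fun t => inner ℝ q (perp (dir t)) with hb
  have hab : ∀ t, |a t| ≤ Q := fun t => by simpa using abs_real_inner_le_norm q (dir t)
  have hbb : ∀ t, |b t| ≤ Q := fun t => by simpa using abs_real_inner_le_norm q (perp (dir t))
  have hra : ∀ t, r - a t ≠ 0 := fun t => by
    have := (abs_le.1 (hab t)).2
    exact ne_of_gt (by linarith)
  have da : ∀ t, HasDerivAt a (b t) t := hasDerivAt_inner_dir q
  have db : ∀ t, HasDerivAt b (-a t) t := hasDerivAt_inner_perp_dir q
  have ca : Continuous a := continuous_iff_continuousAt.2 fun t => (da t).continuousAt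
  have cb : Continuous b := continuous_iff_continuousAt.2 fun t => (db t).continuousAt
  set m : ℝ → ℝ := fun t => b t / (r * (r - a t)) with hm
  set m' : ℝ → ℝ := fun t => (-a t * (r - a t) + b t ^ 2) / (r * (r - a t) ^ 2) with hm'
  have dm : ∀ t, HasDerivAt m (m' t) t := fun t => by
    refine ((db t).div (((da t).const_sub r).const_mul r)
      (mul_ne_zero hr0.ne' (hra t))).congr_deriv ?_
    have := hra t
    simp only [hm']
    field_simp
    ring
  have cm' : Continuous m' := by
    refine Continuous.div ?_ ?_ fun t => mul_ne_zero hr0.ne' (pow_ne_zero 2 (hra t))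
    · exact (ca.neg.mul (continuous_const.sub ca)).add (cb.pow 2)
    · exact continuous_const.mul ((continuous_const.sub ca).pow 2)
  have cm : Continuous m := continuous_iff_continuousAt.2 fun t => (dm t).continuousAt
  set G : ℝ → ℂ := fun t => g (0 + r • dir t) with hG
  set P : ℝ → ℂ := fun t => fderiv ℝ g (0 + r • dir t) (perp (dir t)) with hP
  set D : ℝ → ℂ := fun t => fderiv ℝ g (0 + r • dir t) (dir t) with hD
  have hcont : Continuous fun t => (0 : R2) + r • dir t :=
    continuous_const.add (continuous_dir.const_smul r)
  have cG : Continuous G := hg.continuousOn.comp_continuous hcont hmem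
  have cD1 : Continuous fun t => fderiv ℝ g (0 + r • dir t) :=
    (contDiffOn_fderiv hopen hg).continuousOn.comp_continuous hcont hmem
  have cP : Continuous P := cD1.clm_apply continuous_perp_dir
  have cD : Continuous D := cD1.clm_apply continuous_dir
  set H' : ℝ → ℂ := fun t => ((m' t : ℂ) * G t + (m t : ℂ) * (r * P t)
    + (m t : ℂ) * (-(Complex.I * n)) * G t) * wave n t with hH'
  have cw := continuous_wave n
  have cmC : Continuous fun t => (m t : ℂ) := Complex.continuous_ofReal.comp cm
  have cmC' : Continuous fun t => (m' t : ℂ) := Complex.continuous_ofReal.comp cm'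
  have cH' : Continuous H' := by fun_prop
  have hper : ∫ t in (0 : ℝ)..2 * π, H' t = 0 := by
    rw [intervalIntegral.integral_eq_sub_of_hasDerivAt
      (f := fun t => (m t : ℂ) * G t * wave n t)]
    · have e1 := dir_add_two_pi 0
      have e2 := wave_add_two_pi n 0
      rw [zero_add] at e1 e2
      simp only [hm, hG, ha, hb, e1, e2, sub_self]
    · intro t _
      refine (((dm t).ofReal_comp.fun_mul (hasDerivAt_comp_angular hopen hg (hmem t))).fun_mul
        (hasDerivAt_wave n t)).congr_deriv ?_
      simp only [hH', hG, hP]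
      ring
    · exact cH'.intervalIntegrable _ _
  have iD : IntervalIntegrable (fun t => fderiv ℝ g (0 + r • dir t) (dir t) * wave n t) volume 0
      (2 * π) := (cD.mul cw).intervalIntegrable _ _
  have iG : IntervalIntegrable (fun t => Complex.I * κ * (g (0 + r • dir t) * wave n t)) volume 0
      (2 * π) := (continuous_const.mul (cG.mul cw)).intervalIntegrable _ _
  have h_eq : (√r : ℂ) * (dmode g 0 n r - Complex.I * κ * mode g 0 n r)
      = ∫ t in (0 : ℝ)..2 * π, (√r : ℂ) * ((D t - Complex.I * κ * G t) * wave n t - H' t) := by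
    rw [intervalIntegral.integral_const_mul, intervalIntegral.integral_sub
      (Continuous.intervalIntegrable (by fun_prop) _ _) (cH'.intervalIntegrable _ _), hper,
      sub_zero, dmode, mode, ← intervalIntegral.integral_const_mul,
      ← intervalIntegral.integral_sub iD iG]
    congr 1
    refine intervalIntegral.integral_congr fun t _ => ?_
    simp only [hD, hG]
    ring
  have hbound : ∀ t, ‖(√r : ℂ) * ((D t - Complex.I * κ * G t) * wave n t - H' t)‖
      ≤ K / r + 4 * δ := by
    intro t
    have e : (√r : ℂ) * ((D t - Complex.I * κ * G t) * wave n t - H' t)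
        = (√r : ℂ) * (D t - Complex.I * κ * G t - ((m' t : ℂ) * G t + (m t : ℂ) * (r * P t)
          + (m t : ℂ) * (-(Complex.I * n)) * G t)) * wave n t := by
      simp only [hH']; ring
    rw [e, norm_mul, norm_wave, mul_one]
    have hnr : ‖(0 : R2) + r • dir t‖ = r := by
      rw [zero_add, norm_smul, norm_dir, mul_one, norm_of_nonneg hr0.le]
    have hsl : r - Q ≤ ‖(0 : R2) + r • dir t - q‖ := by
      have := norm_sub_norm_le ((0 : R2) + r • dir t) q
      rwa [hnr] at this
    have hsu : ‖(0 : R2) + r • dir t - q‖ ≤ r + Q := by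
      have := norm_sub_le ((0 : R2) + r • dir t) q
      rwa [hnr] at this
    have hG1 := hCg (0 + r • dir t) (by linarith)
    have hη1 := hrad (0 + r • dir t) (by linarith)
    have hsq := norm_smul_dir_sub_sq q r t
    have hlin : fderiv ℝ g (0 + r • dir t) (0 + r • dir t - q)
        = ((r : ℂ) - a t) * D t - b t * P t := by
      nth_rewrite 2 [zero_add]
      rw [smul_dir_sub, map_sub, map_smul, map_smul, Complex.real_smul, Complex.real_smul]
      simp only [ha, hb, hD, hP]
      push_cast; ring
    rw [← zero_add (r • dir t)] at hsq
    set s := ‖(0 : R2) + r • dir t - q‖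
    have hs0 : 0 < s := by linarith
    refine radiation_defect_bound (s := s) (η := fderiv ℝ g (0 + r • dir t)
      (s⁻¹ • (0 + r • dir t - q)) - Complex.I * κ * G t) hκ hQ hr3.le (hab t) (hbb t) hs0 hsq
      ?_ hη1.le ?_
    · rw [sub_add_cancel, map_smul, hlin, Complex.real_smul]
      have : (s : ℂ) ≠ 0 := by exact_mod_cast hs0.ne'
      push_cast
      field_simp
    · refine hG1.trans ?_
      have e : √s ≤ 2 * √r := by
        rw [show (2 : ℝ) = √4 by rw [show (4 : ℝ) = 2 ^ 2 by norm_num, sqrt_sq (by norm_num)],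
          ← sqrt_mul (by norm_num)]
        exact sqrt_le_sqrt (by linarith)
      nlinarith
  rw [dist_zero_right, h_eq]
  refine (intervalIntegral.norm_integral_le_of_norm_le_const fun t _ => hbound t).trans_lt ?_
  rw [sub_zero, abs_of_pos (by positivity)]
  have hKr : K / r ≤ δ := by
    rw [div_le_iff₀ hr0]
    rw [div_lt_iff₀ hδ0] at hr5
    linarith
  have e : δ * (20 * π) = ε := by rw [hδ]; field_simp
  nlinarith

lemma isOpen_norm_gt (R : ℝ) : IsOpen {x : R2 | R < ‖x‖} :=
  isOpen_lt continuous_const continuous_norm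

lemma zero_add_smul_dir_mem {R r : ℝ} (hR : 0 ≤ R) (hr : R < r) (t : ℝ) :
    (0 : R2) + r • dir t ∈ {x : R2 | R < ‖x‖} := by
  show R < ‖(0 : R2) + r • dir t‖
  rw [zero_add, norm_smul, norm_dir, mul_one, norm_of_nonneg (hR.trans hr.le)]; exact hr

/-- An exterior Helmholtz solution all of whose modes decay faster than `r ^ (-1/2)`, together
with their derivatives, vanishes. -/
lemma IsHelmholtzOn.eq_zero_of_tendsto_mode {κ : ℝ} (hκ : 0 < κ) {φ : R2 → ℂ} {R : ℝ}
    (hR : 0 ≤ R) (hφ : IsHelmholtzOn κ {x | R < ‖x‖} φ)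
    (h0 : ∀ n, Tendsto (fun r : ℝ => (√r : ℂ) * mode φ 0 n r) atTop (𝓝 0))
    (h1 : ∀ n, Tendsto (fun r : ℝ => (√r : ℂ) * dmode φ 0 n r) atTop (𝓝 0)) {x : R2}
    (hx : R < ‖x‖) : φ x = 0 := by
  obtain ⟨t, ht⟩ := exists_polar 0 x
  rw [sub_zero] at ht
  rw [ht]
  refine eq_zero_of_mode_eq_zero ?_ (fun n => ?_) t
  · exact hφ.contDiffOn.continuousOn.comp_continuous
      (continuous_const.add (continuous_dir.const_smul ‖x‖)) (zero_add_smul_dir_mem hR hx)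
  · exact bessel_eq_zero_of_tendsto_zero hκ hR
      (fun r hr => hasDerivAt_mode (isOpen_norm_gt R) hφ.contDiffOn (zero_add_smul_dir_mem hR hr) n)
      (fun r hr => hasDerivAt_dmode (isOpen_norm_gt R) hφ (hR.trans_lt hr)
        (zero_add_smul_dir_mem hR hr) n) (h0 n) (h1 n) hx

lemma conj_mode_of_real {φ : R2 → ℂ} {r : ℝ} (h : ∀ t, (φ (0 + r • dir t)).im = 0) (n : ℤ) :
    (starRingEnd ℂ) (mode φ 0 (-n) r) = mode φ 0 n r := by
  rw [mode, mode, ← intervalIntegral.intervalIntegral_conj]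
  refine intervalIntegral.integral_congr fun t _ => ?_
  simp only [map_mul, conj_wave, neg_neg, Complex.conj_eq_iff_im.2 (h t)]

/-- A real-valued exterior Helmholtz solution whose modes radiate vanishes. -/
lemma IsHelmholtzOn.eq_zero_of_real {κ : ℝ} (hκ : 0 < κ) {φ : R2 → ℂ} {R : ℝ}
    (hR : 0 ≤ R) (hφ : IsHelmholtzOn κ {x | R < ‖x‖} φ) (him : ∀ x, R < ‖x‖ → (φ x).im = 0)
    (hrad : ∀ n, Tendsto (fun r : ℝ => (√r : ℂ) * (dmode φ 0 n r - Complex.I * κ * mode φ 0 n r))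
      atTop (𝓝 0)) {x : R2} (hx : R < ‖x‖) : φ x = 0 := by
  have hm : ∀ n : ℤ, ∀ r ∈ Ioi R, (starRingEnd ℂ) (mode φ 0 (-n) r) = mode φ 0 n r :=
    fun n r hr => conj_mode_of_real (fun t => him _ (zero_add_smul_dir_mem hR hr t)) n
  have hd : ∀ n : ℤ, ∀ r ∈ Ioi R, (starRingEnd ℂ) (dmode φ 0 (-n) r) = dmode φ 0 n r := by
    intro n r hr
    have d := fun n => hasDerivAt_mode (isOpen_norm_gt R) hφ.contDiffOn
      (zero_add_smul_dir_mem hR hr) n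
    have d1 : HasDerivAt (fun r => (starRingEnd ℂ) (mode φ 0 (-n) r))
        ((starRingEnd ℂ) (dmode φ 0 (-n) r)) r :=
      Complex.conjCLE.toContinuousLinearMap.hasFDerivAt.comp_hasDerivAt r (d (-n))
    refine d1.unique ((d n).congr_of_eventuallyEq ?_)
    exact Filter.eventually_of_mem (isOpen_Ioi.mem_nhds hr) (hm n)
  have hconj : ∀ n, Tendsto (fun r : ℝ => (√r : ℂ) *
      (dmode φ 0 n r + Complex.I * κ * mode φ 0 n r)) atTop (𝓝 0) := by
    intro n
    have h := (Complex.continuous_conj.tendsto 0).comp (hrad (-n))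
    rw [map_zero] at h
    refine h.congr' ((eventually_gt_atTop R).mono fun r hr => ?_)
    simp only [Function.comp_apply, map_mul, map_sub, hm n r hr, hd n r hr, Complex.conj_ofReal,
      Complex.conj_I]
    ring
  have hκ' : (κ : ℂ) ≠ 0 := by exact_mod_cast hκ.ne'
  refine hφ.eq_zero_of_tendsto_mode hκ hR (fun n => ?_) (fun n => ?_) hx
  · have h := ((hconj n).sub (hrad n)).const_mul (1 / (2 * Complex.I * κ))
    rw [sub_zero, mul_zero] at h
    refine h.congr fun r => ?_
    field_simp
    ring
  · have h := ((hconj n).add (hrad n)).const_mul (1 / 2)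
    rw [add_zero, mul_zero] at h
    refine h.congr fun r => ?_
    ring

lemma norm_sub_I_mul_sq (κ : ℝ) (f g : ℂ) :
    ‖g - Complex.I * κ * f‖ ^ 2
      = ‖g‖ ^ 2 + κ ^ 2 * ‖f‖ ^ 2 - 2 * κ * ((starRingEnd ℂ) f * g).im := by
  simp only [← Complex.normSq_eq_norm_sq, Complex.normSq_apply, Complex.sub_re, Complex.sub_im,
    Complex.mul_re, Complex.mul_im, Complex.I_re, Complex.I_im, Complex.ofReal_re,
    Complex.ofReal_im, Complex.conj_re, Complex.conj_im]
  ring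

/-- An entire Helmholtz solution whose modes radiate vanishes. -/
lemma IsHelmholtzOn.eq_zero_of_entire {κ : ℝ} (hκ : 0 < κ) {φ : R2 → ℂ}
    (hφ : IsHelmholtzOn κ univ φ)
    (hrad : ∀ n, Tendsto (fun r : ℝ => (√r : ℂ) * (dmode φ 0 n r - Complex.I * κ * mode φ 0 n r))
      atTop (𝓝 0)) {x : R2} (hx : 0 < ‖x‖) : φ x = 0 := by
  have hflux : ∀ n : ℤ, ∀ r ∈ Ioi (0 : ℝ),
      ((starRingEnd ℂ) (mode φ 0 n r) * dmode φ 0 n r).im = 0 := by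
    intro n r₀ hr₀
    set f := mode φ 0 n
    set g := dmode φ 0 n
    set W : ℝ → ℝ := fun r => ((r : ℂ) * ((starRingEnd ℂ) (f r) * g r)).im with hW
    have hd : ∀ r ∈ Ioi (0 : ℝ), HasDerivAt W 0 r := by
      intro r hr
      have d1 : HasDerivAt f (g r) r :=
        hasDerivAt_mode isOpen_univ hφ.contDiffOn (fun _ => mem_univ _) n
      have d2 : HasDerivAt g _ r := hasDerivAt_dmode isOpen_univ hφ hr (fun _ => mem_univ _) n
      have d3 : HasDerivAt (fun r => (starRingEnd ℂ) (f r)) ((starRingEnd ℂ) (g r)) r :=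
        Complex.conjCLE.toContinuousLinearMap.hasFDerivAt.comp_hasDerivAt r d1
      have d4 := Complex.imCLM.hasFDerivAt.comp_hasDerivAt r
        ((Complex.ofRealCLM.hasDerivAt (x := r)).mul (d3.mul d2))
      refine d4.congr_deriv ?_
      have hr0 : (r : ℂ) ≠ 0 := by exact_mod_cast (ne_of_gt hr)
      have e : (Complex.ofRealCLM 1 : ℂ) * ((fun r => (starRingEnd ℂ) (f r)) * g) r
          + Complex.ofRealCLM r * ((starRingEnd ℂ) (g r) * g r + (starRingEnd ℂ) (f r) *
            (-(g r) / r - ((κ : ℂ) ^ 2 - (n : ℂ) ^ 2 / (r : ℂ) ^ 2) * f r))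
          = ((r * ‖g r‖ ^ 2 - (r * κ ^ 2 - n ^ 2 / r) * ‖f r‖ ^ 2 : ℝ) : ℂ) := by
        have e1 : (starRingEnd ℂ) (g r) * g r = (‖g r‖ : ℂ) ^ 2 := Complex.conj_mul' (g r)
        have e2 : (starRingEnd ℂ) (f r) * f r = (‖f r‖ : ℂ) ^ 2 := Complex.conj_mul' (f r)
        simp only [Complex.ofRealCLM_apply, Pi.mul_apply]
        push_cast
        rw [← e1, ← e2]
        field_simp
        ring
      rw [show Complex.imCLM _ = Complex.im _ from rfl]
      exact (congrArg Complex.im e).trans (Complex.ofReal_im _)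
    have hconst : ∀ s ∈ Ioi (0 : ℝ), W s = W r₀ := fun s hs =>
      isOpen_Ioi.is_const_of_deriv_eq_zero isPreconnected_Ioi
        (fun r hr => (hd r hr).differentiableAt.differentiableWithinAt)
        (fun r hr => (hd r hr).deriv) hs hr₀
    obtain ⟨M, hM⟩ := (isCompact_closedBall (0 : R2) 1).exists_bound_of_continuousOn
      (hφ.contDiffOn.continuousOn.mono (subset_univ _))
    obtain ⟨N, hN⟩ := (isCompact_closedBall (0 : R2) 1).exists_bound_of_continuousOn
      ((contDiffOn_fderiv isOpen_univ hφ.contDiffOn).continuousOn.mono (subset_univ _))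
    have hmem : ∀ s ∈ Ioc (0 : ℝ) 1, ∀ t, (0 : R2) + s • dir t ∈ Metric.closedBall (0 : R2) 1 :=
      fun s hs t => by
        rw [mem_closedBall_zero_iff, zero_add, norm_smul, norm_dir, mul_one,
          norm_of_nonneg hs.1.le]
        exact hs.2
    have bf : ∀ s ∈ Ioc (0 : ℝ) 1, ‖f s‖ ≤ M * |2 * π - 0| := fun s hs =>
      intervalIntegral.norm_integral_le_of_norm_le_const fun t _ => by
        rw [norm_mul, norm_wave, mul_one]; exact hM _ (hmem s hs t)
    have bg : ∀ s ∈ Ioc (0 : ℝ) 1, ‖g s‖ ≤ N * |2 * π - 0| := fun s hs =>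
      intervalIntegral.norm_integral_le_of_norm_le_const fun t _ => by
        rw [norm_mul, norm_wave, mul_one]
        refine (ContinuousLinearMap.le_opNorm _ _).trans ?_
        rw [norm_dir, mul_one]
        exact hN _ (hmem s hs t)
    set B := M * |2 * π - 0| * (N * |2 * π - 0|)
    have hb : ∀ s ∈ Ioc (0 : ℝ) 1, |W r₀| ≤ s * B := fun s hs => by
      rw [← hconst s hs.1]
      refine (Complex.abs_im_le_norm _).trans ?_
      rw [norm_mul, norm_mul, Complex.norm_of_nonneg hs.1.le, RCLike.norm_conj]
      exact mul_le_mul_of_nonneg_left (mul_le_mul (bf s hs) (bg s hs) (norm_nonneg _)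
        ((norm_nonneg _).trans (bf s hs))) hs.1.le
    have hlim : Tendsto (fun s : ℝ => s * B) (𝓝[>] 0) (𝓝 0) := by
      have : Tendsto (fun s : ℝ => s * B) (𝓝 0) (𝓝 (0 * B)) :=
        (continuous_id.mul continuous_const).tendsto 0
      rw [zero_mul] at this
      exact this.mono_left nhdsWithin_le_nhds
    have h0 : |W r₀| ≤ 0 := ge_of_tendsto hlim
      (Filter.eventually_of_mem (Ioc_mem_nhdsGT one_pos) hb)
    have h1 : W r₀ = 0 := abs_nonpos_iff.1 h0
    rw [hW] at h1
    simp only [Complex.im_ofReal_mul] at h1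
    exact (mul_eq_zero.1 h1).resolve_left (ne_of_gt hr₀)
  have hsq : ∀ n : ℤ, ∀ r ∈ Ioi (0 : ℝ),
      ‖dmode φ 0 n r - Complex.I * κ * mode φ 0 n r‖ ^ 2
        = ‖dmode φ 0 n r‖ ^ 2 + κ ^ 2 * ‖mode φ 0 n r‖ ^ 2 := fun n r hr => by
    rw [norm_sub_I_mul_sq, hflux n r hr]; ring
  refine (hφ.mono (subset_univ {x : R2 | 0 < ‖x‖})).eq_zero_of_tendsto_mode hκ le_rfl
    (fun n => ?_) (fun n => ?_) hx
  · have hz := (tendsto_zero_iff_norm_tendsto_zero.1 (hrad n)).const_mul (1 / κ)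
    rw [mul_zero] at hz
    refine squeeze_zero_norm' ((eventually_gt_atTop 0).mono fun r hr => ?_) hz
    rw [norm_mul, norm_mul, div_mul_eq_mul_div, one_mul, le_div_iff₀ hκ, mul_assoc]
    refine mul_le_mul_of_nonneg_left ?_ (norm_nonneg _)
    refine abs_le_of_sq_le_sq' ?_ (norm_nonneg _) |>.2
    rw [hsq n r hr]
    nlinarith [sq_nonneg ‖dmode φ 0 n r‖]
  · refine squeeze_zero_norm' ((eventually_gt_atTop 0).mono fun r hr => ?_)
      (tendsto_zero_iff_norm_tendsto_zero.1 (hrad n))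
    rw [norm_mul, norm_mul]
    refine mul_le_mul_of_nonneg_left ?_ (norm_nonneg _)
    refine abs_le_of_sq_le_sq' ?_ (norm_nonneg _) |>.2
    rw [hsq n r hr]
    nlinarith [sq_nonneg (κ * ‖mode φ 0 n r‖)]

lemma RadiatesFrom.comp_refl2 {κ : ℝ} {g : R2 → ℂ} (h : RadiatesFrom κ 0 g) {R₀ : ℝ}
    (hg : ContDiffOn ℝ 2 g {x | R₀ < ‖x‖}) {n : R2} (hn : ‖n‖ = 1) (x₀ : R2) :
    RadiatesFrom κ (refl2 x₀ n 0) (fun x => g (refl2 x₀ n x)) := by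
  intro ε hε
  obtain ⟨R, hR, hRg⟩ := h ε hε
  refine ⟨max R (R₀ + 1), lt_max_of_lt_left hR, fun x hx => ?_⟩
  have e : reflCLM n (x - refl2 x₀ n 0) = refl2 x₀ n x := by
    rw [← refl2_sub, refl2_refl2 hn, sub_zero]
  have hnorm : ‖x - refl2 x₀ n 0‖ = ‖refl2 x₀ n x‖ := by rw [← e, norm_reflCLM hn]
  have hb := hRg (refl2 x₀ n x) (by
    rw [sub_zero, ← hnorm]; exact (le_max_left _ _).trans hx)
  rw [sub_zero] at hb
  have hd : HasFDerivAt (fun x => g (refl2 x₀ n x))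
      ((fderiv ℝ g (refl2 x₀ n x)).comp (reflCLM n)) x :=
    (hasFDerivAt_of_contDiffOn (isOpen_norm_gt R₀) hg (x := refl2 x₀ n x) (by
      show R₀ < ‖refl2 x₀ n x‖
      rw [← hnorm]
      exact (lt_add_one R₀).trans_le ((le_max_right _ _).trans hx))).comp x
      (hasFDerivAt_refl2 x₀ n x)
  rw [hd.fderiv, ContinuousLinearMap.comp_apply, map_smul, e, hnorm]
  exact hb

lemma RadiatesFrom.congr {κ : ℝ} {q : R2} {f g : R2 → ℂ} (h : RadiatesFrom κ q f) {R₀ : ℝ}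
    (hfg : ∀ x, R₀ < ‖x - q‖ → g x = f x) : RadiatesFrom κ q g := by
  intro ε hε
  obtain ⟨R, hR, hRf⟩ := h ε hε
  refine ⟨max R (R₀ + 1), lt_max_of_lt_left hR, fun x hx => ?_⟩
  have hx₀ : R₀ < ‖x - q‖ := (lt_add_one R₀).trans_le ((le_max_right _ _).trans hx)
  have he : g =ᶠ[𝓝 x] f :=
    Filter.eventually_of_mem ((isOpen_exterior q R₀).mem_nhds hx₀) hfg
  rw [he.fderiv_eq, he.self_of_nhds]
  exact hRf x ((le_max_left _ _).trans hx)

lemma mode_add {f g : R2 → ℂ} {c : R2} {r : ℝ} (hf : Continuous fun t => f (c + r • dir t))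
    (hg : Continuous fun t => g (c + r • dir t)) (n : ℤ) :
    mode (fun x => f x + g x) c n r = mode f c n r + mode g c n r := by
  simp only [mode, add_mul]
  exact intervalIntegral.integral_add ((hf.mul (continuous_wave n)).intervalIntegrable _ _)
    ((hg.mul (continuous_wave n)).intervalIntegrable _ _)

lemma dmode_add {U : Set R2} (hU : IsOpen U) {f g : R2 → ℂ} (hf : ContDiffOn ℝ 2 f U)
    (hg : ContDiffOn ℝ 2 g U) {c : R2} {r : ℝ} (h : ∀ t, c + r • dir t ∈ U) (n : ℤ) :
    dmode (fun x => f x + g x) c n r = dmode f c n r + dmode g c n r := by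
  have hcont : Continuous fun t => c + r • dir t :=
    continuous_const.add (continuous_dir.const_smul r)
  have key : ∀ {f : R2 → ℂ}, ContDiffOn ℝ 2 f U → IntervalIntegrable
      (fun t => fderiv ℝ f (c + r • dir t) (dir t) * wave n t) volume 0 (2 * π) := fun hf =>
    ((((contDiffOn_fderiv hU hf).continuousOn.comp_continuous hcont h).clm_apply
      continuous_dir).mul (continuous_wave n)).intervalIntegrable _ _
  rw [dmode, dmode, dmode, ← intervalIntegral.integral_add (key hf) (key hg)]
  refine intervalIntegral.integral_congr fun t _ => ?_
  have := ((hasFDerivAt_of_contDiffOn hU hf (h t)).fun_add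
    (hasFDerivAt_of_contDiffOn hU hg (h t))).fderiv
  simp only [this, add_apply, add_mul]

lemma isPreconnected_norm_gt {R : ℝ} (hR : 0 ≤ R) : IsPreconnected {x : R2 | R < ‖x‖} := by
  have h : {x : R2 | R < ‖x‖} = (fun p : ℝ × ℝ => p.1 • dir p.2) '' (Ioi R ×ˢ univ) := by
    ext x
    constructor
    · intro hx
      obtain ⟨t, ht⟩ := exists_polar 0 x
      exact ⟨(‖x‖, t), ⟨hx, mem_univ t⟩, by simpa using ht.symm⟩
    · rintro ⟨p, hp, rfl⟩
      simpa using zero_add_smul_dir_mem hR hp.1 p.2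
  rw [h]
  exact (isPreconnected_Ioi.prod isPreconnected_univ).image _
    (continuous_fst.smul (continuous_dir.comp continuous_snd)).continuousOn

/-- A radiating solution that is real on a line missing the obstacle vanishes. -/
lemma IsHelmholtzOn.eq_zero_of_im_eq_zero_on_line {κ : ℝ} (hκ : 0 < κ) {U : Set R2}
    (hU : IsOpen U) (hUc : IsPreconnected U) {ψ : R2 → ℂ} (hψ : IsHelmholtzOn κ U ψ)
    (hrad : RadiatesFrom κ 0 ψ) {x₀ n : R2} (hn : ‖n‖ = 1) {δ R₁ : ℝ} (hδ : 0 < δ)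
    (hδU : ∀ x, -δ < (inner ℝ n (x - x₀) : ℝ) → x ∈ U) (hR₁ : ∀ x, R₁ < ‖x‖ → x ∈ U)
    (him : ∀ x, (inner ℝ n (x - x₀) : ℝ) = 0 → (ψ x).im = 0) {x : R2} (hx : x ∈ U) :
    ψ x = 0 := by
  set σ := refl2 x₀ n with hσ
  have hσσ : ∀ x, σ (σ x) = x := refl2_refl2 hn x₀
  have hσc : Continuous σ := continuous_refl2 x₀ n
  have hσn : ∀ x, (inner ℝ n (σ x - x₀) : ℝ) = -inner ℝ n (x - x₀) := inner_refl2 hn x₀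
  have hinner : Continuous fun x : R2 => (inner ℝ n (x - x₀) : ℝ) := by fun_prop
  set R := max R₁ 0 + ‖σ 0‖
  have hR : 0 ≤ R := add_nonneg (le_max_right _ _) (norm_nonneg _)
  have hVU : ∀ x, R < ‖x‖ → x ∈ U := fun x hx => hR₁ x (by
    have := le_max_left R₁ 0
    have := norm_nonneg (σ 0)
    linarith)
  have hVσU : ∀ x, R < ‖x‖ → σ x ∈ U := fun x hx => hR₁ _ (by
    have e : ‖σ x‖ = ‖x - σ 0‖ := by
      rw [← norm_reflCLM hn (x - σ 0), hσ, ← refl2_sub, refl2_refl2 hn, sub_zero]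
    have := norm_sub_norm_le x (σ 0)
    have := le_max_left R₁ 0
    rw [e]
    linarith)
  have hU' : IsOpen (σ ⁻¹' U) := hU.preimage hσc
  have hψσ : IsHelmholtzOn κ (σ ⁻¹' U) (fun x => ψ (σ x)) := hψ.comp_refl2 hU hn x₀
  have hU2 : IsOpen (U ∩ σ ⁻¹' U) := hU.inter hU'
  set φ : R2 → ℂ := fun x => ψ x + ψ (σ x) with hφdef
  have hφ : IsHelmholtzOn κ (U ∩ σ ⁻¹' U) φ :=
    (hψ.mono inter_subset_left).add hU2 (hψσ.mono inter_subset_right)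
  set V : Set R2 := {x | R < ‖x‖} with hVdef
  have hVo : IsOpen V := isOpen_norm_gt R
  have hVsub : V ⊆ U ∩ σ ⁻¹' U := fun x hx => ⟨hVU x hx, hVσU x hx⟩
  obtain ⟨x₁, hx₁V, hx₁L⟩ : ∃ x₁ ∈ V, (inner ℝ n (x₁ - x₀) : ℝ) = 0 := by
    refine ⟨x₀ + (R + ‖x₀‖ + 1) • perp n, ?_, ?_⟩
    · show R < _
      have h1 := norm_sub_le (x₀ + (R + ‖x₀‖ + 1) • perp n) x₀
      rw [add_sub_cancel_left, norm_smul, norm_perp, hn, mul_one,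
        norm_of_nonneg (by positivity)] at h1
      linarith
    · rw [add_sub_cancel_left, inner_smul_right, inner_perp_right, mul_zero]
  -- the imaginary part of `φ` vanishes in the exterior
  have hφim : ∀ x ∈ V, (φ x).im = 0 := by
    have hv := (hφ.mono hVsub).clm_comp hVo (Complex.ofRealCLM.comp Complex.imCLM)
    have hev := hv.eventually_eq_zero_of_even hVo hn
      (fun x _ => by
        show (((φ (σ x)).im : ℝ) : ℂ) = ((φ x).im : ℝ)
        simp only [hφdef, hσσ, add_comm])
      (fun x _ h0 => by
        show (((φ x).im : ℝ) : ℂ) = 0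
        have e : σ x = x := refl2_of_inner_eq_zero h0
        simp [hφdef, e, him x h0]) hx₁V hx₁L
    intro x hx
    have h0 : (((φ x).im : ℝ) : ℂ) = 0 :=
      hv.eq_zero_of_eventually hVo (isPreconnected_norm_gt hR) hx₁V hev hx
    exact_mod_cast h0
  have hψV : ContDiffOn ℝ 2 ψ V := hψ.contDiffOn.mono fun x hx => hVU x hx
  have hψσV : ContDiffOn ℝ 2 (fun x => ψ (σ x)) V := hψσ.contDiffOn.mono fun x hx => hVσU x hx
  have hφV : ∀ x ∈ V, φ x = 0 := by
    refine fun x hx => (hφ.mono hVsub).eq_zero_of_real hκ hR hφim (fun m => ?_) hx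
    have h1 := hrad.tendsto_mode hκ hψV m
    have h2 := (hrad.comp_refl2 hψV hn x₀).tendsto_mode hκ hψσV m
    have h3 := h1.add h2
    rw [add_zero] at h3
    refine h3.congr' ((eventually_gt_atTop R).mono fun r hr => ?_)
    have hcirc := zero_add_smul_dir_mem hR hr
    have hcont : Continuous fun t => (0 : R2) + r • dir t :=
      continuous_const.add (continuous_dir.const_smul r)
    have e1 := mode_add (f := ψ) (g := fun x => ψ (σ x))
      (hψV.continuousOn.comp_continuous hcont hcirc)
      (hψσV.continuousOn.comp_continuous hcont hcirc) m
    have e2 := dmode_add hVo hψV hψσV hcirc m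
    simp only [hφdef]
    rw [e1, e2]
    ring
  -- hence `ψ` is odd about the line, near the line
  have hstrip : ∀ x, -δ < (inner ℝ n (x - x₀) : ℝ) → (inner ℝ n (x - x₀) : ℝ) < δ → φ x = 0 := by
    intro x h1 h2
    set S : Set R2 := {x | (inner ℝ n (x - x₀) : ℝ) ∈ Ioo (-δ) δ} with hS
    have hSo : IsOpen S := isOpen_Ioo.preimage hinner
    have hSc : IsPreconnected S := by
      have : S = (innerSL ℝ n).toLinearMap ⁻¹'
          Ioo (-δ + inner ℝ n x₀) (δ + inner ℝ n x₀) := by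
        ext y
        simp only [hS, mem_ofPred, mem_preimage, mem_Ioo, inner_sub_right,
          ContinuousLinearMap.coe_coe, innerSL_apply_apply]
        constructor <;> rintro ⟨h, h'⟩ <;> constructor <;> linarith
      rw [this]
      exact ((convex_Ioo _ _).linear_preimage _).isPreconnected
    have hSsub : S ⊆ U ∩ σ ⁻¹' U := fun y hy =>
      ⟨hδU y hy.1, hδU (σ y) (by rw [hσn]; linarith [hy.2])⟩
    exact (hφ.mono hSsub).eq_zero_of_eventually hSo hSc (c := x₁)
      (by simp only [hS, mem_ofPred, hx₁L]; exact ⟨by linarith, hδ⟩)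
      (Filter.eventually_of_mem (hVo.mem_nhds hx₁V) hφV) ⟨h1, h2⟩
  -- glue `ψ` with its odd reflection
  set A : Set R2 := {x | -δ < (inner ℝ n (x - x₀) : ℝ)} with hA
  set B : Set R2 := {x | (inner ℝ n (x - x₀) : ℝ) < δ} with hB
  have hAo : IsOpen A := isOpen_lt continuous_const hinner
  have hBo : IsOpen B := isOpen_lt hinner continuous_const
  classical
  set Ψ : R2 → ℂ := fun x => if x ∈ A then ψ x else -ψ (σ x) with hΨ
  have hΨA : ∀ x ∈ A, Ψ x = ψ x := fun x hx => if_pos hx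
  have hΨB : ∀ x ∈ B, Ψ x = (-ContinuousLinearMap.id ℝ ℂ) (ψ (σ x)) := fun x hx => by
    by_cases h : x ∈ A
    · rw [hΨA x h]
      exact eq_neg_of_add_eq_zero_left (hstrip x h hx)
    · exact if_neg h
  have hΨV : ∀ x ∈ V, Ψ x = ψ x := fun x hx => by
    by_cases h : x ∈ A
    · exact hΨA x h
    · exact (if_neg h).trans (eq_neg_of_add_eq_zero_left (hφV x hx)).symm
  have hΨH : IsHelmholtzOn κ univ Ψ := by
    have h1 : IsHelmholtzOn κ A Ψ := (hψ.mono fun x hx => hδU x hx).congr hAo hΨA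
    have h2 : IsHelmholtzOn κ B Ψ :=
      ((hψσ.mono fun x (hx : (inner ℝ n (x - x₀) : ℝ) < δ) => hδU (σ x) (by
        rw [hσn]; linarith)).clm_comp hBo _).congr hBo hΨB
    refine (h1.union hAo hBo h2).mono fun x _ => ?_
    rcases lt_or_ge (-δ) (inner ℝ n (x - x₀) : ℝ) with h | h
    · exact Or.inl h
    · exact Or.inr (show (inner ℝ n (x - x₀) : ℝ) < δ by linarith)
  have hΨrad : RadiatesFrom κ 0 Ψ := hrad.congr (R₀ := R) fun x hx => hΨV x (by rw [sub_zero] at hx; exact hx)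
  have hψ0 : ∀ x ∈ V, ψ x = 0 := fun x hx => by
    rw [← hΨV x hx]
    exact hΨH.eq_zero_of_entire hκ (fun m => hΨrad.tendsto_mode hκ (R₀ := 0)
      (hΨH.contDiffOn.mono (subset_univ _)) m) (hR.trans_lt hx)
  exact hψ.eq_zero_of_eventually hU hUc (hVU x₁ hx₁V)
    (Filter.eventually_of_mem (hVo.mem_nhds hx₁V) hψ0) hx

lemma IsRadiationSolution.isHelmholtzOn {κ : ℝ} {U : Set R2} {ψ : R2 → ℂ}
    (h : IsRadiationSolution κ U ψ) : IsHelmholtzOn κ U ψ := ⟨h.1, h.2.1⟩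

lemma IsRadiationSolution.radiatesFrom_sub {κ : ℝ} {U : Set R2} (hU : IsOpen U)
    {ψ₁ ψ₂ : R2 → ℂ} (h₁ : IsRadiationSolution κ U ψ₁) (h₂ : IsRadiationSolution κ U ψ₂)
    {R₀ : ℝ} (hR₀ : ∀ x, R₀ < ‖x‖ → x ∈ U) : RadiatesFrom κ 0 (fun x => ψ₁ x - ψ₂ x) := by
  intro ε hε
  obtain ⟨R₁, hR₁, hb₁⟩ := h₁.2.2 (ε / 2) (half_pos hε)
  obtain ⟨R₂, hR₂, hb₂⟩ := h₂.2.2 (ε / 2) (half_pos hε)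
  refine ⟨max (max R₁ R₂) (R₀ + 1), lt_max_of_lt_left (lt_max_of_lt_left hR₁), fun x hx => ?_⟩
  rw [sub_zero] at hx ⊢
  have hx1 : R₁ ≤ ‖x‖ := (le_max_left _ _).trans ((le_max_left _ _).trans hx)
  have hx2 : R₂ ≤ ‖x‖ := (le_max_right _ _).trans ((le_max_left _ _).trans hx)
  have hxU : x ∈ U := hR₀ x ((lt_add_one R₀).trans_le ((le_max_right _ _).trans hx))
  have e := ((hasFDerivAt_of_contDiffOn hU h₁.1 hxU).fun_sub
    (hasFDerivAt_of_contDiffOn hU h₂.1 hxU)).fderiv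
  rw [e, sub_apply]
  have t := norm_sub_le
    ((√‖x‖ : ℂ) * (fderiv ℝ ψ₁ x (‖x‖⁻¹ • x) - Complex.I * (κ : ℂ) * ψ₁ x))
    ((√‖x‖ : ℂ) * (fderiv ℝ ψ₂ x (‖x‖⁻¹ • x) - Complex.I * (κ : ℂ) * ψ₂ x))
  have b1 := hb₁ x hxU hx1
  have b2 := hb₂ x hxU hx2
  rw [← mul_sub] at t
  refine lt_of_le_of_lt (le_of_eq ?_) (t.trans_lt (by linarith))
  congr 2
  ring

/-- A compact connected set missing a line lies at positive distance on one side of it. -/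
lemma exists_unit_normal {K : Set R2} (hK : IsCompact K) (hKc : IsConnected K) {x₀ θ : R2}
    (hθ : ‖θ‖ = 1) (hdisj : ∀ s : ℝ, x₀ + s • θ ∉ K) :
    ∃ n : R2, ‖n‖ = 1 ∧ (∃ δ > 0, ∀ x ∈ K, (inner ℝ n (x - x₀) : ℝ) ≤ -δ) ∧
      ∀ x, (inner ℝ n (x - x₀) : ℝ) = 0 → ∃ s : ℝ, x₀ + s • θ = x := by
  have hline : ∀ x, (inner ℝ (perp θ) (x - x₀) : ℝ) = 0 → ∃ s : ℝ, x₀ + s • θ = x := by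
    intro x hx
    have h := eq_smul_add_smul_perp hθ (x - x₀)
    rw [hx, zero_smul, add_zero] at h
    exact ⟨_, by rw [← h]; abel⟩
  have hcont : ∀ n : R2, Continuous fun x : R2 => (inner ℝ n (x - x₀) : ℝ) := fun n => by fun_prop
  have hne : ∀ x ∈ K, (inner ℝ (perp θ) (x - x₀) : ℝ) ≠ 0 := fun x hx h0 => by
    obtain ⟨s, rfl⟩ := hline x h0
    exact hdisj s hx
  have hgap : ∀ n : R2, (∀ x ∈ K, (inner ℝ n (x - x₀) : ℝ) < 0) →
      ∃ δ > 0, ∀ x ∈ K, (inner ℝ n (x - x₀) : ℝ) ≤ -δ := fun n hneg => by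
    obtain ⟨y, hy, hmax⟩ := hK.exists_isMaxOn hKc.nonempty (hcont n).continuousOn
    exact ⟨-inner ℝ n (y - x₀), neg_pos.2 (hneg y hy), fun x hx => by
      rw [neg_neg]; exact hmax hx⟩
  by_cases hneg : ∀ x ∈ K, (inner ℝ (perp θ) (x - x₀) : ℝ) < 0
  · exact ⟨perp θ, by rw [norm_perp, hθ], hgap _ hneg, hline⟩
  · push Not at hneg
    obtain ⟨y, hy, hy0⟩ := hneg
    refine ⟨-perp θ, by rw [norm_neg, norm_perp, hθ], hgap _ fun x hx => ?_, fun x hx => ?_⟩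
    · rw [inner_neg_left, neg_lt_zero]
      by_contra! hx0
      obtain ⟨z, hz, hz0⟩ := hKc.isPreconnected.intermediate_value hx hy
        (hcont (perp θ)).continuousOn ⟨hx0, hy0⟩
      exact hne z hz hz0
    · rw [inner_neg_left, neg_eq_zero] at hx
      exact hline x hx

theorem im_on_line_determines_radiation_solution_everywhere
    (κ : ℝ) (hκ : 0 < κ)
    (U : Set R2) (hUopen : IsOpen U) (hUconn : IsConnected U)
    (hKcpt : IsCompact Uᶜ) (hKconn : IsConnected Uᶜ)
    (x₀ θ : R2) (hθ : ‖θ‖ = 1)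
    (L : Set R2) (hL : L = Set.range (fun s : ℝ => x₀ + s • θ)) (hLU : L ⊆ U)
    (ψ₁ ψ₂ : R2 → ℂ)
    (h₁ : IsRadiationSolution κ U ψ₁) (h₂ : IsRadiationSolution κ U ψ₂)
    (him : ∀ x ∈ L, (ψ₁ x).im = (ψ₂ x).im) :
    ∀ x ∈ U, ψ₁ x = ψ₂ x := by
  intro x hx
  have hmemL : ∀ s : ℝ, x₀ + s • θ ∈ L := fun s => by rw [hL]; exact ⟨s, rfl⟩
  obtain ⟨n, hn, ⟨δ, hδ, hδK⟩, hline⟩ := exists_unit_normal hKcpt hKconn hθ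
    (x₀ := x₀) fun s hs => hs (hLU (hmemL s))
  obtain ⟨R, hR⟩ := hKcpt.isBounded.subset_closedBall 0
  have hRU : ∀ x : R2, R < ‖x‖ → x ∈ U := fun x hx => by
    by_contra h
    exact absurd (mem_closedBall_zero_iff.1 (hR h)) (not_le.2 hx)
  have hψ : IsHelmholtzOn κ U (fun x => ψ₁ x - ψ₂ x) :=
    (h₁.isHelmholtzOn.add hUopen
      (h₂.isHelmholtzOn.clm_comp hUopen (-ContinuousLinearMap.id ℝ ℂ))).congr hUopen
      fun x _ => sub_eq_add_neg _ _
  refine sub_eq_zero.1 (hψ.eq_zero_of_im_eq_zero_on_line (x₀ := x₀) hκ hUopen hUconn.isPreconnected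
    (h₁.radiatesFrom_sub hUopen h₂ hRU) hn hδ (fun y hy => ?_) hRU (fun y hy => ?_) hx)
  · by_contra h
    exact absurd (hδK y h) (not_le.2 hy)
  · obtain ⟨s, rfl⟩ := hline y hy
    rw [Complex.sub_im, him _ (hmemL s), sub_self]
end
end

section
/- Let κ > 0, n ∈ ℕ, let ψ : ℝ² → ℂ, and let f₀, f₁, …, f_{n+1} be bounded complex-valued functions on the unit circle of ℝ² such that there exist C₀ > 0 and R₀ > 0 with |ψ(x) − √(2/(π κ |x|)) e^{i(κ|x| − π/4)} Σ_{j=0}^{n+1} f_j(x/|x|) / |x|^j| ≤ C₀ |x|^{−n−5/2} for all x with |x| ≥ R₀. Define ψ_n(x) = √(2/(π κ |x|)) e^{i(κ|x| − π/4)} Σ_{j=0}^{n} f_j(x/|x|) / |x|^j, I(x) = √|x| · Im ψ(x), I_n(x) = √|x| · Im ψ_n(x), and J_n(x) = |x|^{n+1} (I(x) − I_n(x)). Then there exist C > 0 and R > 0 such that for all x with |x| ≥ R, |2i·J_n(x) − √(2/(πκ)) (e^{i(κ|x| − π/4)} f_{n+1}(x/|x|) − e^{−i(κ|x| − π/4)}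 \overline{f_{n+1}(x/|x|)})| ≤ C/|x|. -/
noncomputable section

open Real Set

/-- The truncated far-field expansion
`ψ_n(x) = √(2/(πκ|x|)) e^{i(κ|x| − π/4)} Σ_{j=0}^{n} f_j(x/|x|)/|x|^j`. -/
def psiN (κ : ℝ) (f : ℕ → R2 → ℂ) (n : ℕ) (x : R2) : ℂ :=
  (Real.sqrt (2 / (π * κ * ‖x‖)) : ℂ) *
    Complex.exp (Complex.I * ((κ * ‖x‖ - π / 4 : ℝ) : ℂ)) *
      ∑ j ∈ Finset.range (n + 1), f j (‖x‖⁻¹ • x) / (‖x‖ : ℂ) ^ j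

/-- The rescaled imaginary part `I(x) = √|x| · Im ψ(x)`. -/
def Ifun (ψ : R2 → ℂ) (x : R2) : ℝ := Real.sqrt ‖x‖ * (ψ x).im

/-- The residual `J_n(x) = |x|^{n+1} (I(x) − I_n(x))`, where `I(x) = √|x| Im ψ(x)`
and `I_n(x) = √|x| Im ψ_n(x)`. -/
def JN (κ : ℝ) (ψ : R2 → ℂ) (f : ℕ → R2 → ℂ) (n : ℕ) (x : R2) : ℝ :=
  ‖x‖ ^ (n + 1) * (Ifun ψ x - Ifun (psiN κ f n) x)

/-- The last term of `ψ_{n+1}`, rescaled by `|x|^{n+1} √|x|`, is the leading far-field term with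
coefficient `f_{n+1}`. -/
lemma scaled_psiN_succ_sub (κ : ℝ) (f : ℕ → R2 → ℂ) (n : ℕ) {x : R2} (hx : 0 < ‖x‖) :
    ((‖x‖ ^ (n + 1) * Real.sqrt ‖x‖ : ℝ) : ℂ) * (psiN κ f (n + 1) x - psiN κ f n x) =
      (Real.sqrt (2 / (π * κ)) : ℂ) *
        (Complex.exp (Complex.I * ((κ * ‖x‖ - π / 4 : ℝ) : ℂ)) * f (n + 1) (‖x‖⁻¹ • x)) := by
  have hsqrt : Real.sqrt ‖x‖ * Real.sqrt (2 / (π * κ * ‖x‖)) = Real.sqrt (2 / (π * κ)) := by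
    rw [← Real.sqrt_mul hx.le]
    congr 1
    rw [← div_div, mul_div_cancel₀ _ hx.ne']
  have hx' : (‖x‖ : ℂ) ≠ 0 := by exact_mod_cast hx.ne'
  rw [← hsqrt, psiN, psiN, Finset.sum_range_succ _ (n + 1)]
  push_cast
  field_simp
  ring

lemma JN_eq_im (κ : ℝ) (ψ : R2 → ℂ) (f : ℕ → R2 → ℂ) (n : ℕ) (x : R2) :
    JN κ ψ f n x =
      (((‖x‖ ^ (n + 1) * Real.sqrt ‖x‖ : ℝ) : ℂ) * (ψ x - psiN κ f n x)).im := by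
  rw [Complex.im_ofReal_mul, Complex.sub_im, JN, Ifun, Ifun]
  ring

lemma sub_conj_exp_mul (t : ℝ) (z : ℂ) :
    Complex.exp (Complex.I * (t : ℂ)) * z -
        Complex.exp (-Complex.I * (t : ℂ)) * (starRingEnd ℂ) z =
      2 * Complex.I * ((Complex.exp (Complex.I * (t : ℂ)) * z).im : ℂ) := by
  have hconj : Complex.exp (-Complex.I * (t : ℂ)) * (starRingEnd ℂ) z =
      (starRingEnd ℂ) (Complex.exp (Complex.I * (t : ℂ)) * z) := by
    rw [map_mul, ← Complex.exp_conj, map_mul, Complex.conj_I, Complex.conj_ofReal]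
  rw [hconj, Complex.sub_conj]
  push_cast
  ring

theorem residual_asymptotics_induction_step
    (κ : ℝ) (hκ : 0 < κ) (n : ℕ) (ψ : R2 → ℂ) (f : ℕ → R2 → ℂ)
    (hbdd : ∀ j ≤ n + 1, ∃ M : ℝ, ∀ θ : R2, ‖θ‖ = 1 → ‖f j θ‖ ≤ M)
    (C₀ R₀ : ℝ) (hC₀ : 0 < C₀) (hR₀ : 0 < R₀)
    (hasym : ∀ x : R2, R₀ ≤ ‖x‖ →
      ‖ψ x - psiN κ f (n + 1) x‖ ≤ C₀ * ‖x‖ ^ (-(n : ℝ) - 5 / 2)) :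
    ∃ C > (0 : ℝ), ∃ R > (0 : ℝ), ∀ x : R2, R ≤ ‖x‖ →
      ‖(2 * Complex.I * ((JN κ ψ f n x : ℝ) : ℂ) -
          (Real.sqrt (2 / (π * κ)) : ℂ) *
            (Complex.exp (Complex.I * ((κ * ‖x‖ - π / 4 : ℝ) : ℂ)) * f (n + 1) (‖x‖⁻¹ • x) -
              Complex.exp (-Complex.I * ((κ * ‖x‖ - π / 4 : ℝ) : ℂ)) *
                (starRingEnd ℂ) (f (n + 1) (‖x‖⁻¹ • x))) : ℂ)‖
        ≤ C / ‖x‖ := by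
  refine ⟨2 * C₀, by positivity, R₀, hR₀, fun x hxR => ?_⟩
  have hx : 0 < ‖x‖ := hR₀.trans_le hxR
  set A : ℝ := ‖x‖ ^ (n + 1) * Real.sqrt ‖x‖ with hA
  have hA0 : 0 ≤ A := by positivity
  set w : ℂ := Complex.exp (Complex.I * ((κ * ‖x‖ - π / 4 : ℝ) : ℂ)) * f (n + 1) (‖x‖⁻¹ • x)
    with hw
  have hlead : (A : ℂ) * (psiN κ f (n + 1) x - psiN κ f n x) =
      (Real.sqrt (2 / (π * κ)) : ℂ) * w := scaled_psiN_succ_sub κ f n hx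
  have hres : JN κ ψ f n x - Real.sqrt (2 / (π * κ)) * w.im =
      A * (ψ x - psiN κ f (n + 1) x).im := by
    rw [JN_eq_im, ← Complex.im_ofReal_mul, ← hlead, ← Complex.sub_im, ← mul_sub,
      sub_sub_sub_cancel_right, Complex.im_ofReal_mul]
  have hpow : A * ‖x‖ ^ (-(n : ℝ) - 5 / 2) = ‖x‖⁻¹ := by
    rw [hA, ← Real.rpow_natCast, Real.sqrt_eq_rpow, ← Real.rpow_add hx, ← Real.rpow_add hx,
      ← Real.rpow_neg_one]
    congr 1
    push_cast
    ring
  have hfactor : 2 * Complex.I * ((JN κ ψ f n x : ℝ) : ℂ) -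
      (Real.sqrt (2 / (π * κ)) : ℂ) * (2 * Complex.I * (w.im : ℂ)) =
      2 * Complex.I * ((A * (ψ x - psiN κ f (n + 1) x).im : ℝ) : ℂ) := by
    rw [← hres]
    push_cast
    ring
  rw [hw, sub_conj_exp_mul, ← hw, hfactor, norm_mul, norm_mul, Complex.norm_I, Complex.norm_real,
    norm_mul, Real.norm_of_nonneg hA0, Real.norm_eq_abs, Complex.norm_two, mul_one]
  calc 2 * (A * |(ψ x - psiN κ f (n + 1) x).im|)
      ≤ 2 * (A * (C₀ * ‖x‖ ^ (-(n : ℝ) - 5 / 2))) := by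
        gcongr
        exact (Complex.abs_im_le_norm _).trans (hasym x hxR)
    _ = 2 * C₀ * (A * ‖x‖ ^ (-(n : ℝ) - 5 / 2)) := by ring
    _ = 2 * C₀ / ‖x‖ := by rw [hpow, div_eq_mul_inv]
end
end

section
/- Let κ > 0, let θ ∈ ℝ² be a unit vector, and for k = 1, 2 let ψ_k : ℝ² → ℂ and (f_j^{(k)})_{j ∈ ℕ} be complex numbers such that for every N ∈ ℕ there exist C_N > 0 and R_N > 0 with |ψ_k(sθ) − √(2/(π κ s)) e^{i(κs − π/4)} Σ_{j=0}^{N} f_j^{(k)} s^{−j}| ≤ C_N s^{−N−3/2} for all s ≥ R_N. If there exists s₀ > 0 such that Im ψ₁(sθ) = Im ψ₂(sθ) for all s ≥ s₀, then f_j^{(1)} = f_j^{(2)} for every j ∈ ℕ. -/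
noncomputable section

open Real Set

open Filter Topology in
/-- A nonzero constant cannot have `Im (e^{i(κs - β)} c) → 0` as `s → ∞`. -/
lemma eq_zero_of_tendsto_im_exp_mul {κ : ℝ} (hκ : 0 < κ) (β : ℝ) {c : ℂ}
    (h : Tendsto (fun s : ℝ => (Complex.exp (Complex.I * ((κ * s - β : ℝ) : ℂ)) * c).im)
      atTop (𝓝 0)) : c = 0 := by
  have phase (α : ℝ) : (Complex.exp (Complex.I * (α : ℂ)) * c).im = 0 := by
    have hlim : Tendsto (fun m : ℕ => (α + β + 2 * π * m) / κ) atTop atTop :=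
      (tendsto_atTop_add_const_left _ _
        (tendsto_natCast_atTop_atTop.const_mul_atTop (by positivity))).atTop_div_const hκ
    refine tendsto_nhds_unique (tendsto_const_nhds.congr fun m => ?_) (h.comp hlim)
    have harg : Complex.I * ((κ * ((α + β + 2 * π * m) / κ) - β : ℝ) : ℂ)
        = Complex.I * (α : ℂ) + m * (2 * π * Complex.I) := by
      rw [mul_div_cancel₀ _ hκ.ne']
      push_cast
      ring
    simp only [Function.comp_apply]
    rw [harg, Complex.exp_add, Complex.exp_nat_mul_two_pi_mul_I, mul_one]
  have him := phase 0
  have hre := phase (π / 2)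
  rw [show Complex.I * ((π / 2 : ℝ) : ℂ) = π / 2 * Complex.I by push_cast; ring,
    Complex.exp_pi_div_two_mul_I] at hre
  exact Complex.ext (by simpa using hre) (by simpa using him)

lemma rpow_neg_natCast_sub_three_halves {s : ℝ} (hs : 0 < s) (n : ℕ) :
    s ^ (-(n : ℝ) - 3 / 2) = (√s)⁻¹ * (s ^ n)⁻¹ * s⁻¹ := by
  rw [show -(n : ℝ) - 3 / 2 = -(1 / 2) + -(n : ℝ) + -1 by ring, rpow_add hs, rpow_add hs,
    rpow_neg hs.le, rpow_neg hs.le, rpow_neg hs.le, rpow_natCast, rpow_one, sqrt_eq_rpow]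

/-- If two numbers with equal imaginary parts are approximated by `a e S₁` and `a e S₂`, where
`S₁ - S₂ = c / x` and `a`, `x` are real, then `Im (e c)` is controlled by the two errors. -/
lemma abs_mul_im_le_of_im_eq {z₁ z₂ e S₁ S₂ c : ℂ} {a x E₁ E₂ : ℝ} (him : z₁.im = z₂.im)
    (hS : S₁ - S₂ = c / (x : ℂ)) (h₁ : ‖z₁ - a * e * S₁‖ ≤ E₁) (h₂ : ‖z₂ - a * e * S₂‖ ≤ E₂) :
    |a * x⁻¹ * (e * c).im| ≤ E₁ + E₂ := by
  have key : (a : ℂ) * e * S₁ - a * e * S₂ = ((a * x⁻¹ : ℝ) : ℂ) * (e * c) := by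
    rw [← mul_sub, hS]
    push_cast
    ring
  have him' : a * x⁻¹ * (e * c).im
      = ((z₂ - a * e * S₂) - (z₁ - a * e * S₁)).im := by
    rw [← Complex.im_ofReal_mul, ← key]
    simp only [Complex.sub_im, him]
    ring
  rw [him']
  exact (Complex.abs_im_le_norm _).trans
    ((norm_sub_le _ _).trans (by linarith))

theorem im_on_ray_determines_expansion_coefficients
    (κ : ℝ) (hκ : 0 < κ) (θ : R2) (hθ : ‖θ‖ = 1)
    (ψ₁ ψ₂ : R2 → ℂ) (f₁ f₂ : ℕ → ℂ)
    (h₁ : ∀ N : ℕ, ∃ C > (0 : ℝ), ∃ R > (0 : ℝ), ∀ s : ℝ, R ≤ s →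
      norm (ψ₁ (s • θ) - (Real.sqrt (2 / (π * κ * s)) : ℂ) *
          Complex.exp (Complex.I * ((κ * s - π / 4 : ℝ) : ℂ)) *
            ∑ j ∈ Finset.range (N + 1), f₁ j / (s : ℂ) ^ j)
        ≤ C * s ^ (-(N : ℝ) - 3 / 2))
    (h₂ : ∀ N : ℕ, ∃ C > (0 : ℝ), ∃ R > (0 : ℝ), ∀ s : ℝ, R ≤ s →
      norm (ψ₂ (s • θ) - (Real.sqrt (2 / (π * κ * s)) : ℂ) *
          Complex.exp (Complex.I * ((κ * s - π / 4 : ℝ) : ℂ)) *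
            ∑ j ∈ Finset.range (N + 1), f₂ j / (s : ℂ) ^ j)
        ≤ C * s ^ (-(N : ℝ) - 3 / 2))
    (s₀ : ℝ) (hs₀ : 0 < s₀)
    (him : ∀ s : ℝ, s₀ ≤ s → (ψ₁ (s • θ)).im = (ψ₂ (s • θ)).im) :
    ∀ j : ℕ, f₁ j = f₂ j := by
  intro n
  induction n using Nat.strong_induction_on with
  | _ n ih =>
  obtain ⟨C₁, -, R₁, -, H₁⟩ := h₁ n
  obtain ⟨C₂, -, R₂, -, H₂⟩ := h₂ n
  refine sub_eq_zero.mp (eq_zero_of_tendsto_im_exp_mul hκ (π / 4) ?_)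
  have hA : 0 < √(2 / (π * κ)) := by positivity
  refine squeeze_zero_norm' (a := fun s : ℝ => (C₁ + C₂) / √(2 / (π * κ)) * s⁻¹) ?_
    (by simpa using tendsto_inv_atTop_zero.const_mul ((C₁ + C₂) / √(2 / (π * κ))))
  filter_upwards [Filter.eventually_ge_atTop R₁, Filter.eventually_ge_atTop R₂,
    Filter.eventually_ge_atTop s₀] with s hs₁ hs₂ hs
  have hs_pos : 0 < s := hs₀.trans_le hs
  have hsum : ∑ j ∈ Finset.range (n + 1), f₁ j / (s : ℂ) ^ j
      - ∑ j ∈ Finset.range (n + 1), f₂ j / (s : ℂ) ^ j = (f₁ n - f₂ n) / ((s ^ n : ℝ) : ℂ) := by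
    rw [Finset.sum_range_succ, Finset.sum_range_succ,
      Finset.sum_congr rfl fun j hj => by rw [ih j (Finset.mem_range.mp hj)]]
    push_cast
    ring
  have hbound := abs_mul_im_le_of_im_eq (him s hs) hsum (H₁ s hs₁) (H₂ s hs₂)
  have hsqrt : √(2 / (π * κ * s)) = √(2 / (π * κ)) * (√s)⁻¹ := by
    rw [← div_div, sqrt_div (by positivity), div_eq_mul_inv]
  have hw : 0 < (√s)⁻¹ * (s ^ n)⁻¹ := by positivity
  rw [rpow_neg_natCast_sub_three_halves hs_pos, hsqrt, mul_assoc √(2 / (π * κ)), abs_mul,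
    abs_of_pos (mul_pos hA hw)] at hbound
  rw [Real.norm_eq_abs, div_mul_eq_mul_div, le_div_iff₀ hA]
  refine le_of_mul_le_mul_left ?_ hw
  linarith
end
end
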